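/- Let F = (f_1,f_2) be in ℤ[x,y], generating a zero-dimensional ideal I in ℚ[x,y], with both f_i of total degree at most d ≥ 1 and all integer coefficients of absolute value at most e^h. Let G = (g_0,…,g_s) be the reduced minimal lexicographic Gröbner basis of I (for x ≺ y). Then there exists a nonzero integer β such that: (a) β·g_j ∈ ℤ[x,y] for all j; (b) |β| ≤ exp(C(2,d,Δ_2(d),h)) and every coefficient of every β·g_j has absolute value at most exp(C(2,d,Δ_2(d),h)); and (c) for every prime p not dividing β, the images of g_0,…,g_s in F_p[x,y] (well defined since all denominators divide β) form the reduced minimal lexicographic Gröbner basis of the ideal generated by f_1 mod p, f_2 mod p in F_p[x,y]. -/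

import Mathlib

noncomputable section

open Polynomial

/-- Bivariate polynomials `k[x][y]`: the inner `X` is `x`, the outer `X` is `y`. -/
abbrev Biv (k : Type*) [CommRing k] : Type _ := Polynomial (Polynomial k)

variable {k : Type*} [CommRing k]

/-- The leading monomial of `f`, as the pair (y-exponent, x-exponent), for the
lexicographic order induced by `x ≺ y`. -/
def lmon (f : Biv k) : ℕ × ℕ := (f.natDegree, f.leadingCoeff.natDegree)

/-- Divisibility of monomials: `x^{p.2} y^{p.1}` divides `x^{q.2} y^{q.1}`. -/
def monDvd (p q : ℕ × ℕ) : Prop := p.1 ≤ q.1 ∧ p.2 ≤ q.2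

/-- Lexicographic comparison of monomials, `y`-exponent first. -/
def monLt (p q : ℕ × ℕ) : Prop := p.1 < q.1 ∨ (p.1 = q.1 ∧ p.2 < q.2)

/-- The monomial `x^{m.2} y^{m.1}` occurs in `f` (has a nonzero coefficient). -/
def occursIn (f : Biv k) (m : ℕ × ℕ) : Prop := (f.coeff m.1).coeff m.2 ≠ 0

/-- `G` is a Gröbner basis of `I` for the lexicographic order with `x ≺ y`:
its elements are nonzero elements of `I`, and the leading monomial of any nonzero
element of `I` is divisible by the leading monomial of some element of `G`. -/
def IsGB (G : List (Biv k)) (I : Ideal (Biv k)) : Prop :=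
  (∀ g ∈ G, g ≠ 0 ∧ g ∈ I) ∧
  ∀ f ∈ I, f ≠ 0 → ∃ g ∈ G, monDvd (lmon g) (lmon f)

/-- `f` is monic w.r.t. lex `x ≺ y`: the coefficient of its leading monomial is `1`. -/
def lexMonic (f : Biv k) : Prop := f.leadingCoeff.Monic

/-- `g 0, …, g s` is the reduced minimal lexicographic Gröbner basis of `I`,
listed in decreasing order of leading monomials. -/
def IsReducedGB {s : ℕ} (g : Fin (s + 1) → Biv k) (I : Ideal (Biv k)) : Prop :=
  IsGB (List.ofFn g) I ∧
  (∀ j, lexMonic (g j)) ∧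
  (∀ j l, j ≠ l → ∀ m : ℕ × ℕ, occursIn (g j) m → ¬ monDvd (lmon (g l)) m) ∧
  (∀ j l : Fin (s + 1), j < l → monLt (lmon (g l)) (lmon (g j)))

/-- Every monomial of `f` of `y`-degree `< i` is reduced w.r.t. the family `g`. -/
def reducedBelow {s : ℕ} (g : Fin (s + 1) → Biv k) (i : ℕ) (f : Biv k) : Prop :=
  ∀ m : ℕ × ℕ, m.1 < i → occursIn f m → ∀ j, ¬ monDvd (lmon (g j)) m

/-- `A` is the detaching sequence associated to the reduced Gröbner basis `g` of `I`:
`A i = 0` for `i < n_s`, `A (n_j) = g j`, and otherwise `A i` is obtained from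
`y * A (i-1)` by reducing the terms of `y`-degree `< i` modulo `g`
(so `A i - y * A (i-1)` lies in `I` and has `y`-degree `< i`, and the part of `A i`
of `y`-degree `< i` is reduced w.r.t. `g`). -/
def IsDetachingSeq {s : ℕ} (g : Fin (s + 1) → Biv k) (I : Ideal (Biv k))
    (A : ℕ → Biv k) : Prop :=
  (∀ i, i < (g (Fin.last s)).natDegree → A i = 0) ∧
  (∀ j, A ((g j).natDegree) = g j) ∧
  (∀ i, (g (Fin.last s)).natDegree ≤ i → (∀ j, (g j).natDegree ≠ i) →
    (A i - Polynomial.X * A (i - 1)) ∈ I ∧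
    (A i - Polynomial.X * A (i - 1)).degree < (i : WithBot ℕ) ∧
    reducedBelow g i (A i))

/-- The total degree of a bivariate polynomial `f ∈ k[x][y]`. -/
def totDeg {k : Type*} [CommRing k] (f : Biv k) : ℕ :=
  f.support.sup fun j => j + (f.coeff j).natDegree

/-- The height bound `B(n,d,h) = (N+1)h + N log N + log(n(d+1))` with
`N = n²d − nd + n`, for Hermite normal forms of `n × n` matrices of degree `≤ d`
and height `≤ h` over `ℤ[x]`. -/
def Bfun (n d : ℕ) (h : ℝ) : ℝ :=
  (((n ^ 2 * d - n * d + n : ℕ) : ℝ) + 1) * h +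
    ((n ^ 2 * d - n * d + n : ℕ) : ℝ) * Real.log ((n ^ 2 * d - n * d + n : ℕ) : ℝ) +
    Real.log ((n : ℝ) * ((d : ℝ) + 1))

/-- The height bound `C(t,d,D,h) = B(tD,d,h) + h + log 2`. -/
def Cfun (t d D : ℕ) (h : ℝ) : ℝ := Bfun (t * D) d h + h + Real.log 2

/-- `Δ₁(d_y) = d_y`. -/
def Delta1 (dy : ℕ) : ℕ := dy

/-- `Δ₂(d) = 2d′² + d′` with `d′ = max(d,3)`. -/
def Delta2 (d : ℕ) : ℕ := 2 * max d 3 ^ 2 + max d 3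

/-- `Δ₃(d) = 16d′⁴ + 2d′² + 2d′` with `d′ = max(d,3)`. -/
def Delta3 (d : ℕ) : ℕ := 16 * max d 3 ^ 4 + 2 * max d 3 ^ 2 + 2 * max d 3

/-- The inclusion `ℤ[x,y] → ℚ[x,y]`. -/
def toQ : Biv ℤ →+* Biv ℚ :=
  Polynomial.mapRingHom (Polynomial.mapRingHom (Int.castRingHom ℚ))

/-- The reduction `ℤ[x,y] → F_p[x,y]`. -/
def toP (p : ℕ) : Biv ℤ →+* Biv (ZMod p) :=
  Polynomial.mapRingHom (Polynomial.mapRingHom (Int.castRingHom (ZMod p)))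

/-! ### Total degree filtration -/

section TDsec

variable {K : Type*} [Field K]

/-- Polynomials of total degree at most `m`. -/
def TD (K : Type*) [Field K] (m : ℕ) : Submodule K (Biv K) where
  carrier := {p | ∀ a b, m < a + b → (p.coeff a).coeff b = 0}
  add_mem' := by
    intro p q hp hq a b hab
    simp [hp a b hab, hq a b hab]
  zero_mem' := by intro a b _; simp
  smul_mem' := by
    intro c p hp a b hab
    simp [hp a b hab]

lemma mem_TD {m : ℕ} {p : Biv K} :
    p ∈ TD K m ↔ ∀ a b, m < a + b → (p.coeff a).coeff b = 0 := Iff.rfl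

lemma TD_mono {m n : ℕ} (h : m ≤ n) : TD K m ≤ TD K n := by
  intro p hp a b hab
  exact hp a b (by omega)

lemma TD_mul {m n : ℕ} {p q : Biv K} (hp : p ∈ TD K m) (hq : q ∈ TD K n) :
    p * q ∈ TD K (m + n) := by
  intro a b hab
  rw [Polynomial.coeff_mul, Polynomial.finsetSum_coeff]
  refine Finset.sum_eq_zero fun x hx => ?_
  rw [Polynomial.coeff_mul]
  refine Finset.sum_eq_zero fun y hy => ?_
  rw [Finset.HasAntidiagonal.mem_antidiagonal] at hx hy
  by_cases h1 : m < x.1 + y.1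
  · rw [hp _ _ h1, zero_mul]
  · rw [hq x.2 y.2 (by omega), mul_zero]

lemma TD_natDegree {m : ℕ} {p : Biv K} (hp : p ∈ TD K m) : p.natDegree ≤ m := by
  rw [Polynomial.natDegree_le_iff_coeff_eq_zero]
  intro a ha
  ext b
  simpa using hp a b (by omega)

lemma TD_mono_mem (a b : ℕ) (c : K) :
    (Polynomial.monomial a (Polynomial.monomial b c) : Biv K) ∈ TD K (a + b) := by
  intro a' b' hab
  rw [Polynomial.coeff_monomial]
  split_ifs with h
  · rw [Polynomial.coeff_monomial, if_neg (by omega)]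
  · simp

lemma TD_one : (1 : Biv K) ∈ TD K 0 := by
  have := TD_mono_mem (K := K) 0 0 1
  simpa using this

lemma TD_pow {m : ℕ} {p : Biv K} (hp : p ∈ TD K m) (n : ℕ) : p ^ n ∈ TD K (m * n) := by
  induction n with
  | zero => simpa using TD_one
  | succ n ih =>
    rw [pow_succ, Nat.mul_succ]
    exact TD_mul ih hp

lemma TD_monomial_coeff {m a : ℕ} {p : Biv K} (hp : p ∈ TD K m) (e i : ℕ) (he : e + a = i + m) :
    (Polynomial.monomial i (p.coeff a) : Biv K) ∈ TD K e := by
  intro a' b' hab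
  rw [Polynomial.coeff_monomial]
  split_ifs with h
  · exact hp a b' (by omega)
  · simp

lemma TD_div_aux {F : Biv K} (hF : F.Monic) (hFt : F ∈ TD K F.natDegree) (m : ℕ) :
    ∀ n, ∀ p : Biv K, p.natDegree < n → p ∈ TD K m →
      ∃ q r, q ∈ TD K m ∧ r ∈ TD K m ∧ r + F * q = p ∧ r.degree < F.degree := by
  intro n
  induction n with
  | zero => intro p hp; omega
  | succ n ih =>
    intro p hpn hp
    by_cases hlt : p.degree < F.degree
    · exact ⟨0, p, zero_mem _, hp, by simp, hlt⟩
    have hp0 : p ≠ 0 := by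
      rintro rfl
      apply hlt
      rw [Polynomial.degree_zero, bot_lt_iff_ne_bot, Ne, Polynomial.degree_eq_bot]
      exact hF.ne_zero
    have hle : F.natDegree ≤ p.natDegree :=
      Polynomial.natDegree_le_natDegree (not_lt.mp hlt)
    have hm := TD_natDegree hp
    set t : Biv K := Polynomial.monomial (p.natDegree - F.natDegree) (p.coeff p.natDegree) with ht
    have htm : t ∈ TD K (m - F.natDegree) :=
      TD_monomial_coeff hp _ _ (by omega)
    have hFt' : F * t ∈ TD K m := by
      have := TD_mul hFt htm
      rwa [show F.natDegree + (m - F.natDegree) = m by omega] at this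
    have hdeg : (p - F * t).degree < p.degree := by
      have h1 : F * t = F * (Polynomial.C p.leadingCoeff * Polynomial.X ^ (p.natDegree - F.natDegree)) := by
        rw [ht, ← Polynomial.C_mul_X_pow_eq_monomial]; rfl
      rw [h1]
      rw [mul_comm]
      rw [mul_comm]
      exact Polynomial.div_wf_lemma ⟨not_lt.mp hlt, hp0⟩ hF
    have hlt2 : (p - F * t).natDegree < n ∨ p - F * t = 0 := by
      by_cases h0 : p - F * t = 0
      · exact Or.inr h0
      · left
        have := Polynomial.natDegree_lt_natDegree h0 hdeg
        omega
    rcases hlt2 with h | h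
    · obtain ⟨q, r, hq, hr, e, hd⟩ := ih _ h (sub_mem hp hFt')
      refine ⟨q + t, r, add_mem hq (TD_mono (by omega) htm), hr, ?_, hd⟩
      linear_combination e
    · refine ⟨t, 0, TD_mono (by omega) htm, zero_mem _, ?_, ?_⟩
      · linear_combination -h
      · rw [Polynomial.degree_zero, bot_lt_iff_ne_bot, Ne, Polynomial.degree_eq_bot]
        exact hF.ne_zero

lemma TD_div {F : Biv K} (hF : F.Monic) (hFt : F ∈ TD K F.natDegree) {m : ℕ} {p : Biv K}
    (hp : p ∈ TD K m) : p /ₘ F ∈ TD K m ∧ p %ₘ F ∈ TD K m := by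
  obtain ⟨q, r, hq, hr, e, hd⟩ := TD_div_aux hF hFt m _ p (Nat.lt_succ_self _) hp
  obtain ⟨h1, h2⟩ := Polynomial.div_modByMonic_unique q r hF ⟨e, hd⟩
  rw [h1, h2]; exact ⟨hq, hr⟩

lemma TD_of_C_mul {R : Polynomial K} (hR : R ≠ 0) {b : Biv K} {t : ℕ}
    (h : Polynomial.C R * b ∈ TD K t) : b ∈ TD K t := by
  intro i j hij
  by_cases h0 : b.coeff i = 0
  · simp [h0]
  apply Polynomial.coeff_eq_zero_of_natDegree_lt
  by_contra hlt
  have h1 : (R * b.coeff i).coeff (R.natDegree + (b.coeff i).natDegree) ≠ 0 := by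
    rw [← Polynomial.natDegree_mul hR h0]
    exact Polynomial.leadingCoeff_ne_zero.mpr (mul_ne_zero hR h0)
  apply h1
  have := h i (R.natDegree + (b.coeff i).natDegree) (by omega)
  rwa [Polynomial.coeff_C_mul] at this

/-- index set for the monomials `y^j x^i`, `j < e`, `i + j ≤ m`. -/
def Sidx (e m : ℕ) : Finset (Σ _ : ℕ, ℕ) := (Finset.range e).sigma fun j => Finset.range (m + 1 - j)

lemma card_Sidx {e m d : ℕ} (h : e ≤ m) : (Sidx e (m + d)).card = (Sidx e m).card + e * d := by
  unfold Sidx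
  rw [Finset.card_sigma, Finset.card_sigma]
  simp only [Finset.card_range]
  have : e * d = ∑ _x ∈ Finset.range e, d := by simp
  rw [this, ← Finset.sum_add_distrib]
  refine Finset.sum_congr rfl fun x hx => ?_
  rw [Finset.mem_range] at hx
  omega

/-- the polynomial with given coefficients. -/
def ofS (e m : ℕ) : ((Sidx e m) → K) →ₗ[K] Biv K where
  toFun c := ∑ s : Sidx e m, Polynomial.monomial s.1.1 (Polynomial.monomial s.1.2 (c s))
  map_add' c c' := by simp [Finset.sum_add_distrib]
  map_smul' c c' := by
    simp only [Pi.smul_apply, RingHom.id_apply, Finset.smul_sum, Polynomial.smul_monomial]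

lemma ofS_coeff (e m : ℕ) (c : (Sidx e m) → K) (s : Sidx e m) :
    ((ofS e m c).coeff s.1.1).coeff s.1.2 = c s := by
  have hdef : ofS e m c =
    ∑ s : Sidx e m, Polynomial.monomial s.1.1 (Polynomial.monomial s.1.2 (c s)) := rfl
  rw [hdef, Polynomial.finsetSum_coeff, Polynomial.finsetSum_coeff]
  rw [Finset.sum_eq_single s]
  · simp
  · intro t _ hts
    rw [Polynomial.coeff_monomial]
    split_ifs with h
    · rw [Polynomial.coeff_monomial, if_neg]
      intro h'
      apply hts
      apply Subtype.ext
      rcases t with ⟨⟨a, b⟩, _⟩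
      rcases s with ⟨⟨a', b'⟩, _⟩
      simp only at h h'
      subst h h'
      rfl
    · simp
  · simp

lemma ofS_mem (e m : ℕ) (c : (Sidx e m) → K) : ofS e m c ∈ TD K m := by
  refine Submodule.sum_mem _ fun s _ => ?_
  have := s.2
  simp only [Sidx, Finset.mem_sigma, Finset.mem_range] at this
  exact TD_mono (by omega) (TD_mono_mem _ _ _)

lemma ofS_degree (e m : ℕ) (c : (Sidx e m) → K) : (ofS e m c).degree < (e : WithBot ℕ) := by
  rw [← Polynomial.mem_degreeLT]
  refine Submodule.sum_mem _ fun s _ => ?_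
  have := s.2
  simp only [Sidx, Finset.mem_sigma, Finset.mem_range] at this
  rw [Polynomial.mem_degreeLT]
  exact lt_of_le_of_lt (Polynomial.degree_monomial_le _ _) (by exact_mod_cast this.1)

/-- The coefficients indexed by `Sidx`. -/
def toS (e m : ℕ) : Biv K →ₗ[K] ((Sidx e m) → K) where
  toFun p := fun s => (p.coeff s.1.1).coeff s.1.2
  map_add' c c' := by ext; simp
  map_smul' c c' := by ext; simp

lemma eq_zero_of_toS {e m : ℕ} {p : Biv K} (hp : p ∈ TD K m) (hd : p.degree < (e : WithBot ℕ))
    (h : toS e m p = 0) : p = 0 := by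
  ext a b
  rw [Polynomial.coeff_zero, Polynomial.coeff_zero]
  by_cases ha : a < e
  · by_cases hab : m < a + b
    · exact hp a b hab
    · have : (⟨a, b⟩ : Σ _ : ℕ, ℕ) ∈ Sidx e m := by
        simp only [Sidx, Finset.mem_sigma, Finset.mem_range]; omega
      exact congrFun h ⟨_, this⟩
  · rw [Polynomial.coeff_eq_zero_of_degree_lt (n := a) (p := p), Polynomial.coeff_zero]
    exact lt_of_lt_of_le hd (by exact_mod_cast not_lt.mp ha)

/-- The key dimension count. -/
lemma key_dim {F1 F2 : Biv K} (hF : F1.Monic) (hFt : F1 ∈ TD K F1.natDegree) {d : ℕ}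
    (hed : F1.natDegree ≤ d) (h2 : F2 ∈ TD K d) (hrel : IsRelPrime F1 F2)
    (m : ℕ) (hm : d ≤ m) (v : Fin (d ^ 2 + 1) → Biv K) (hv : ∀ i, v i ∈ TD K (m + d)) :
    ∃ c : Fin (d ^ 2 + 1) → K, c ≠ 0 ∧ ∃ a b : Biv K, b ∈ TD K m ∧
      ∑ i, c i • v i = a * F1 + b * F2 := by
  set e := F1.natDegree with he
  have hFd : F1.degree = (e : WithBot ℕ) := Polynomial.degree_eq_natDegree hF.ne_zero
  let Ψ : ((Sidx e m → K) × (Fin (d ^ 2 + 1) → K)) →ₗ[K] Biv K :=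
    (LinearMap.mulLeft K F2 ∘ₗ ofS e m).coprod (Fintype.linearCombination K v)
  let Φ := toS e (m + d) ∘ₗ (Polynomial.modByMonicHom F1).restrictScalars K ∘ₗ Ψ
  have hker : LinearMap.ker Φ ≠ ⊥ := by
    apply LinearMap.ker_ne_bot_of_finrank_lt
    rw [Module.finrank_prod, Module.finrank_fintype_fun_eq_card, Module.finrank_fintype_fun_eq_card,
      Module.finrank_fintype_fun_eq_card, Fintype.card_coe, Fintype.card_coe, Fintype.card_fin,
      card_Sidx (hed.trans hm)]
    have : e * d ≤ d ^ 2 := by rw [sq]; exact Nat.mul_le_mul_right d hed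
    omega
  obtain ⟨⟨b, c⟩, hbc, hne⟩ := Submodule.exists_mem_ne_zero_of_ne_bot hker
  have hΨ : Ψ (b, c) = F2 * ofS e m b + ∑ i, c i • v i := by
    simp [Ψ, Fintype.linearCombination_apply]
  have hΨm : Ψ (b, c) ∈ TD K (m + d) := by
    rw [hΨ]
    refine add_mem ?_ (Submodule.sum_mem _ fun i _ => Submodule.smul_mem _ _ (hv i))
    rw [add_comm m d]
    exact TD_mul h2 (ofS_mem _ _ _)
  have hmod : Ψ (b, c) %ₘ F1 = 0 := by
    apply eq_zero_of_toS (e := e) (TD_div hF hFt hΨm).2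
    · rw [← hFd]; exact Polynomial.degree_modByMonic_lt _ hF
    · exact hbc
  rw [Polynomial.modByMonic_eq_zero_iff_dvd hF] at hmod
  obtain ⟨q, hq⟩ := hmod
  refine ⟨c, ?_, q, -ofS e m b, neg_mem (ofS_mem _ _ _), ?_⟩
  · rintro rfl
    apply hne
    have h0 : F1 ∣ F2 * ofS e m b := ⟨q, by rw [← hq, hΨ]; simp⟩
    have h1 : F1 ∣ ofS e m b := hrel.dvd_of_dvd_mul_left h0
    have h3 : ofS e m b = 0 := by
      apply Polynomial.eq_zero_of_dvd_of_degree_lt h1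
      rw [hFd]; exact ofS_degree _ _ _
    have h4 : b = 0 := by
      ext s
      rw [← ofS_coeff e m b s, h3]; simp
    rw [h4]; rfl
  · rw [hΨ] at hq
    linear_combination hq

lemma memb_monic {F1 F2 : Biv K} (hF : F1.Monic) (hFt : F1 ∈ TD K F1.natDegree) {d : ℕ}
    (hed : F1.natDegree ≤ d) (h2 : F2 ∈ TD K d) (hrel : IsRelPrime F1 F2)
    (m : ℕ) (g : Biv K) (hg : g ∈ TD K m) (A B : Biv K) (hAB : g = A * F1 + B * F2) :
    ∃ a b : Biv K, a ∈ TD K (m + d ^ 2 + 2 * d) ∧ b ∈ TD K (m + d ^ 2 + 2 * d) ∧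
      g = a * F1 + b * F2 := by
  obtain ⟨c, hc, q, u, hu, hR⟩ := key_dim hF hFt hed h2 hrel (d ^ 2 + d) (by omega)
    (fun i => Polynomial.C (Polynomial.X ^ (i : ℕ))) (by
      intro i
      have := TD_mono_mem (K := K) 0 i 1
      rw [Polynomial.monomial_zero_left, Polynomial.monomial_one_right_eq_X_pow] at this
      exact TD_mono (by omega) this)
  set R : Polynomial K := ∑ i, c i • Polynomial.X ^ (i : ℕ) with hRdef
  have hR0 : R ≠ 0 := by
    intro h0
    apply hc
    ext i
    have : R.coeff i = 0 := by rw [h0]; simp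
    rw [hRdef, Polynomial.finsetSum_coeff, Finset.sum_eq_single i] at this
    · simpa using this
    · intro j _ hj
      have : (i : ℕ) ≠ j := fun h => hj (Fin.ext h.symm)
      simp [Polynomial.coeff_X_pow, this]
    · simp
  have hR' : Polynomial.C R = q * F1 + u * F2 := by
    rw [← hR, hRdef, map_sum]
    refine Finset.sum_congr rfl fun i _ => ?_
    rw [Polynomial.smul_C]
  set b := B %ₘ F1 with hb
  have hB : b + F1 * (B /ₘ F1) = B := Polynomial.modByMonic_add_div B F1
  set a := A + (B /ₘ F1) * F2 with ha
  have hab : g = a * F1 + b * F2 := by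
    rw [hAB, ha]; linear_combination - F2 * hB
  have hFd := Polynomial.degree_eq_natDegree hF.ne_zero
  have hRb : (u * g) %ₘ F1 = Polynomial.C R * b := by
    refine (Polynomial.div_modByMonic_unique (u * a - q * b) _ hF ⟨?_, ?_⟩).2
    · rw [hR', hab]; ring
    · refine lt_of_le_of_lt ?_ (Polynomial.degree_modByMonic_lt B hF)
      rw [← Polynomial.smul_eq_C_mul]
      exact Polynomial.degree_smul_le _ _
  have hbT : b ∈ TD K (d ^ 2 + d + m) := by
    apply TD_of_C_mul hR0
    rw [← hRb]
    exact (TD_div hF hFt (TD_mul hu hg)).2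
  refine ⟨a, b, ?_, TD_mono (by omega) hbT, hab⟩
  have h1 : a * F1 ∈ TD K (m + d ^ 2 + 2 * d) := by
    have : a * F1 = g - b * F2 := by rw [hab]; ring
    rw [this]
    exact sub_mem (TD_mono (by omega) hg) (TD_mono (by omega) (TD_mul hbT h2))
  have h3 : (a * F1) /ₘ F1 = a :=
    (Polynomial.div_modByMonic_unique a 0 hF ⟨by ring, by
      rw [Polynomial.degree_zero, bot_lt_iff_ne_bot, Ne, Polynomial.degree_eq_bot]
      exact hF.ne_zero⟩).1
  rw [← h3]
  exact (TD_div hF hFt h1).1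

end TDsec
section Shear

variable {K : Type*} [Field K]

/-- The linear change of coordinates `x ↦ x + c y`, `y ↦ y`. -/
def shear (c : K) : Biv K →+* Biv K :=
  Polynomial.eval₂RingHom
    (Polynomial.eval₂RingHom (Polynomial.C.comp Polynomial.C)
      (Polynomial.C Polynomial.X + Polynomial.C (Polynomial.C c) * Polynomial.X))
    Polynomial.X

@[simp] lemma shear_X (c : K) : shear c Polynomial.X = Polynomial.X := by
  simp [shear]

@[simp] lemma shear_CX (c : K) : shear c (Polynomial.C Polynomial.X) =
    Polynomial.C Polynomial.X + Polynomial.C (Polynomial.C c) * Polynomial.X := by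
  simp [shear]

@[simp] lemma shear_CC (c r : K) : shear c (Polynomial.C (Polynomial.C r)) =
    Polynomial.C (Polynomial.C r) := by
  simp [shear]

lemma shear_shear (c : K) (p : Biv K) : shear (-c) (shear c p) = p := by
  have : (shear (-c)).comp (shear c) = RingHom.id (Biv K) := by
    apply Polynomial.ringHom_ext'
    · apply Polynomial.ringHom_ext'
      · ext r; simp
      · simp only [RingHom.comp_apply, shear_CX, map_add, map_mul, shear_X, shear_CC, map_neg,
          RingHom.id_apply]
        ring
    · simp
  exact congrArg (fun f => f p) this

lemma shear_shear' (c : K) (p : Biv K) : shear c (shear (-c) p) = p := by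
  have := shear_shear (-c) p
  rwa [neg_neg] at this

lemma monomial_eq (a b : ℕ) (r : K) :
    (Polynomial.monomial a (Polynomial.monomial b r) : Biv K) =
      Polynomial.C (Polynomial.C r) * Polynomial.C Polynomial.X ^ b * Polynomial.X ^ a := by
  rw [← Polynomial.C_mul_X_pow_eq_monomial, ← Polynomial.C_mul_X_pow_eq_monomial]
  simp

lemma TD_decomp {m : ℕ} {p : Biv K} (hp : p ∈ TD K m) :
    p = ∑ a ∈ Finset.range (m + 1), ∑ b ∈ Finset.range (m + 1),
      Polynomial.monomial a (Polynomial.monomial b ((p.coeff a).coeff b)) := by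
  conv_lhs => rw [p.as_sum_range' (m + 1) (Nat.lt_succ_of_le (TD_natDegree hp))]
  refine Finset.sum_congr rfl fun a _ => ?_
  rw [← map_sum, ← Polynomial.as_sum_range']
  refine Nat.lt_succ_of_le ?_
  rw [Polynomial.natDegree_le_iff_coeff_eq_zero]
  intro b hb
  exact hp a b (by omega)

lemma shear_monomial (c : K) (a b : ℕ) (r : K) :
    shear c (Polynomial.monomial a (Polynomial.monomial b r)) =
    Polynomial.C (Polynomial.C r) *
      (Polynomial.C Polynomial.X + Polynomial.C (Polynomial.C c) * Polynomial.X) ^ b *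
      Polynomial.X ^ a := by
  rw [monomial_eq]; simp

lemma TD_lin (c : K) :
    (Polynomial.C Polynomial.X + Polynomial.C (Polynomial.C c) * Polynomial.X : Biv K) ∈ TD K 1 := by
  have h1 := TD_mono_mem (K := K) 0 1 1
  have h2 := TD_mono_mem (K := K) 1 0 c
  rw [monomial_eq] at h1 h2
  simpa using add_mem h1 h2

lemma TD_shear (c : K) {m : ℕ} {p : Biv K} (hp : p ∈ TD K m) : shear c p ∈ TD K m := by
  rw [TD_decomp hp, map_sum]
  refine Submodule.sum_mem _ fun a _ => ?_
  rw [map_sum]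
  refine Submodule.sum_mem _ fun b _ => ?_
  by_cases hab : m < a + b
  · rw [hp a b hab]; simp
  · rw [shear_monomial]
    have h1 : (Polynomial.C (Polynomial.C ((p.coeff a).coeff b)) : Biv K) ∈ TD K 0 := by
      simpa using TD_mono_mem (K := K) 0 0 ((p.coeff a).coeff b)
    have h2 : (Polynomial.X : Biv K) ∈ TD K 1 := by
      have := TD_mono_mem (K := K) 1 0 1
      rw [monomial_eq] at this
      simpa using this
    exact TD_mono (by omega) (TD_mul (TD_mul h1 (TD_pow (TD_lin c) b)) (TD_pow h2 a))

lemma shear_top_monomial (c : K) (a b e : ℕ) (r : K) :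
    ((shear c (Polynomial.monomial a (Polynomial.monomial b r))).coeff e).coeff 0 =
      if a + b = e then r * c ^ b else 0 := by
  have h : ∀ q : Biv K, (q.coeff e).coeff 0 = (q.map (Polynomial.evalRingHom 0)).coeff e := by
    intro q
    rw [Polynomial.coeff_map, Polynomial.coe_evalRingHom, Polynomial.coeff_zero_eq_eval_zero]
  rw [h, shear_monomial]
  have : Polynomial.map (Polynomial.evalRingHom 0) (Polynomial.C (Polynomial.C r) *
      (Polynomial.C Polynomial.X + Polynomial.C (Polynomial.C c) * Polynomial.X) ^ b *
      Polynomial.X ^ a : Biv K) = Polynomial.monomial (a + b) (r * c ^ b) := by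
    rw [← Polynomial.C_mul_X_pow_eq_monomial]
    simp only [Polynomial.map_mul, Polynomial.map_C, Polynomial.map_pow, Polynomial.map_add,
      Polynomial.map_X, Polynomial.coe_evalRingHom, Polynomial.eval_C, Polynomial.eval_X, map_zero,
      zero_add, map_mul, map_pow]
    ring
  rw [this, Polynomial.coeff_monomial]

lemma exists_shear [Infinite K] {F : Biv K} {e : ℕ} (hF : F ∈ TD K e) {a0 b0 : ℕ}
    (h0 : (F.coeff a0).coeff b0 ≠ 0) (hab0 : a0 + b0 = e) :
    ∃ c : K, ((shear c F).coeff e).coeff 0 ≠ 0 := by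
  let P : Polynomial K := ∑ b ∈ Finset.range (e + 1), Polynomial.monomial b ((F.coeff (e - b)).coeff b)
  have hP : P ≠ 0 := by
    intro h
    apply h0
    have : P.coeff b0 = 0 := by rw [h]; simp
    rw [Polynomial.finsetSum_coeff, Finset.sum_eq_single b0] at this
    · rwa [Polynomial.coeff_monomial, if_pos rfl, show e - b0 = a0 by omega] at this
    · intro b _ hb
      rw [Polynomial.coeff_monomial, if_neg hb]
    · intro h; exact absurd (Finset.mem_range.mpr (by omega)) h
  obtain ⟨c, hc⟩ : ∃ c, P.eval c ≠ 0 := by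
    by_contra! hcon
    exact hP (Polynomial.funext fun c => by rw [hcon c]; simp)
  refine ⟨c, ?_⟩
  convert hc using 1
  conv_lhs => rw [TD_decomp hF]
  simp only [map_sum, Polynomial.finsetSum_coeff, shear_top_monomial]
  rw [Finset.sum_comm, Polynomial.eval_finsetSum]
  refine Finset.sum_congr rfl fun b hb => ?_
  rw [Finset.mem_range] at hb
  rw [Finset.sum_eq_single (e - b), if_pos (by omega), Polynomial.eval_monomial]
  · intro a _ ha
    rw [if_neg (by omega)]
  · intro h; exact absurd (Finset.mem_range.mpr (by omega)) h

lemma exists_exact {F : Biv K} {d : ℕ} (hF : F ∈ TD K d) (h0 : F ≠ 0) :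
    ∃ e ≤ d, F ∈ TD K e ∧ ∃ a b, a + b = e ∧ (F.coeff a).coeff b ≠ 0 := by
  classical
  have hex : ∃ e, F ∈ TD K e := ⟨d, hF⟩
  refine ⟨Nat.find hex, Nat.find_min' hex hF, Nat.find_spec hex, ?_⟩
  by_contra! hcon
  have hs := Nat.find_spec hex
  by_cases hz : Nat.find hex = 0
  · apply h0
    ext a b
    rw [hz] at hs hcon
    by_cases hab : a + b = 0
    · simpa using hcon a b hab
    · simpa using hs a b (by omega)
  · refine Nat.find_min hex (m := Nat.find hex - 1) (by omega) ?_
    intro a b hab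
    by_cases hab' : a + b = Nat.find hex
    · exact hcon a b hab'
    · exact hs a b (by omega)

/-- Reduction to the monic case. -/
lemma reduce_monic [Infinite K] {F1 F2 : Biv K} {d : ℕ} (h1 : F1 ∈ TD K d)
    (h0 : F1 ≠ 0) (hrel : IsRelPrime F1 F2) :
    ∃ c u : K, u ≠ 0 ∧ ∃ G1 : Biv K, shear c F1 = Polynomial.C (Polynomial.C u) * G1 ∧
      G1.Monic ∧ G1 ∈ TD K G1.natDegree ∧ G1.natDegree ≤ d ∧ IsRelPrime G1 (shear c F2) := by
  obtain ⟨e, hed, hFe, a, b, hab, hne⟩ := exists_exact h1 h0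
  obtain ⟨c, hc⟩ := exists_shear hFe hne hab
  set u := ((shear c F1).coeff e).coeff 0 with hu
  have hs := TD_shear c hFe
  have hce : (shear c F1).coeff e = Polynomial.C u := by
    ext b
    rw [Polynomial.coeff_C]
    split_ifs with hb
    · rw [hb]
    · exact hs e b (by omega)
  let G1 : Biv K := Polynomial.C (Polynomial.C u⁻¹) * shear c F1
  have hG : shear c F1 = Polynomial.C (Polynomial.C u) * G1 := by
    rw [← mul_assoc, ← Polynomial.C_mul, ← Polynomial.C_mul, mul_inv_cancel₀ hc]; simp
  have hGe : G1 ∈ TD K e := by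
    have h1 : (Polynomial.C (Polynomial.C u⁻¹) : Biv K) ∈ TD K 0 := by
      simpa using TD_mono_mem (K := K) 0 0 u⁻¹
    simpa using TD_mul h1 hs
  have hcoe : G1.coeff e = 1 := by
    rw [Polynomial.coeff_C_mul, hce, ← Polynomial.C_mul, inv_mul_cancel₀ hc, Polynomial.C_1]
  have hnd : G1.natDegree = e := by
    apply le_antisymm (TD_natDegree hGe)
    apply Polynomial.le_natDegree_of_ne_zero
    rw [hcoe]; exact one_ne_zero
  refine ⟨c, u, hc, G1, hG, ?_, by rwa [hnd], by rwa [hnd], ?_⟩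
  · rw [Polynomial.Monic, Polynomial.leadingCoeff, hnd, hcoe]
  · intro q hq1 hq2
    have e1 : shear (-c) q ∣ F1 := by
      have : q ∣ shear c F1 := by rw [hG]; exact Dvd.dvd.mul_left hq1 _
      have := map_dvd (shear (-c)) this
      rwa [shear_shear] at this
    have e2 : shear (-c) q ∣ F2 := by
      have := map_dvd (shear (-c)) hq2
      rwa [shear_shear] at this
    have := (hrel e1 e2).map (shear c)
    rwa [shear_shear'] at this

lemma bezout_dep [Infinite K] {F1 F2 : Biv K} {d : ℕ} (h1 : F1 ∈ TD K d) (h2 : F2 ∈ TD K d)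
    (h0 : F1 ≠ 0) (hrel : IsRelPrime F1 F2) (M : ℕ) (v : Fin (d ^ 2 + 1) → Biv K)
    (hv : ∀ i, v i ∈ TD K M) :
    ∃ c : Fin (d ^ 2 + 1) → K, c ≠ 0 ∧ ∃ a b, ∑ i, c i • v i = a * F1 + b * F2 := by
  obtain ⟨c, u, hu, G1, hG, hmon, hT, hdeg, hr⟩ := reduce_monic h1 h0 hrel
  obtain ⟨w, hw, a, b, -, hab⟩ := key_dim hmon hT hdeg (TD_shear c h2) hr (M + d) (by omega)
    (fun i => shear c (v i)) (fun i => TD_mono (by omega) (TD_shear c (hv i)))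
  refine ⟨w, hw, shear (-c) a * Polynomial.C (Polynomial.C u⁻¹), shear (-c) b, ?_⟩
  have hG1 : shear (-c) G1 = Polynomial.C (Polynomial.C u⁻¹) * F1 := by
    have := congrArg (shear (-c)) hG
    rw [shear_shear, map_mul, shear_CC] at this
    rw [this, ← mul_assoc, ← Polynomial.C_mul, ← Polynomial.C_mul, inv_mul_cancel₀ hu]; simp
  have := congrArg (shear (-c)) hab
  rw [map_add, map_mul, map_mul, hG1, shear_shear, map_sum] at this
  rw [mul_assoc, ← this]
  refine Finset.sum_congr rfl fun i _ => ?_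
  have hsm : ∀ (r : K) (p : Biv K), r • p = Polynomial.C (Polynomial.C r) * p := by
    intro r p
    ext a b
    simp
  rw [hsm, hsm, map_mul, shear_shear, shear_CC]

lemma memb_bound [Infinite K] {F1 F2 : Biv K} {d : ℕ} (h1 : F1 ∈ TD K d) (h2 : F2 ∈ TD K d)
    (h0 : F1 ≠ 0) (hrel : IsRelPrime F1 F2) (m : ℕ) (g : Biv K) (hg : g ∈ TD K m)
    (A B : Biv K) (hAB : g = A * F1 + B * F2) :
    ∃ a b : Biv K, a ∈ TD K (m + d ^ 2 + 2 * d) ∧ b ∈ TD K (m + d ^ 2 + 2 * d) ∧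
      g = a * F1 + b * F2 := by
  obtain ⟨c, u, hu, G1, hG, hmon, hT, hdeg, hr⟩ := reduce_monic h1 h0 hrel
  have hG1 : shear (-c) G1 = Polynomial.C (Polynomial.C u⁻¹) * F1 := by
    have := congrArg (shear (-c)) hG
    rw [shear_shear, map_mul, shear_CC] at this
    rw [this, ← mul_assoc, ← Polynomial.C_mul, ← Polynomial.C_mul, inv_mul_cancel₀ hu]; simp
  obtain ⟨a, b, ha, hb, hab⟩ := memb_monic hmon hT hdeg (TD_shear c h2) hr m (shear c g)
    (TD_shear c hg) (shear c A * Polynomial.C (Polynomial.C u)) (shear c B) (by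
      rw [hAB, map_add, map_mul, map_mul, hG]; ring)
  refine ⟨shear (-c) a * Polynomial.C (Polynomial.C u⁻¹), shear (-c) b, ?_, TD_shear _ hb, ?_⟩
  · have h1 : (Polynomial.C (Polynomial.C u⁻¹) : Biv K) ∈ TD K 0 := by
      simpa using TD_mono_mem (K := K) 0 0 u⁻¹
    simpa using TD_mul (TD_shear (-c) ha) h1
  · have := congrArg (shear (-c)) hab
    rw [map_add, map_mul, map_mul, hG1, shear_shear, shear_shear] at this
    rw [this]; ring

/-- Zero-dimensional implies coprime. -/
lemma relPrime_of_finite {F1 F2 : Biv K} (I : Ideal (Biv K)) (h1 : F1 ∈ I) (h2 : F2 ∈ I)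
    (hI : ∀ x ∈ I, ∃ a b, x = a * F1 + b * F2)
    [FiniteDimensional K (Biv K ⧸ I)] : IsRelPrime F1 F2 := by
  intro q hq1 hq2
  have hdvd : ∀ x ∈ I, q ∣ x := by
    intro x hx
    obtain ⟨a, b, rfl⟩ := hI x hx
    exact dvd_add (Dvd.dvd.mul_left hq1 _) (Dvd.dvd.mul_left hq2 _)
  have hint : ∀ z : Biv K, ∃ P : Polynomial K, P.Monic ∧ q ∣ Polynomial.aeval z P := by
    intro z
    obtain ⟨P, hP, hz⟩ := IsIntegral.of_finite K (Ideal.Quotient.mk I z)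
    refine ⟨P, hP, hdvd _ ?_⟩
    rw [← Ideal.Quotient.eq_zero_iff_mem]
    rw [← Polynomial.aeval_def] at hz
    rw [← hz]
    exact (Polynomial.aeval_algHom_apply (Ideal.Quotient.mkₐ K I) z P).symm
  obtain ⟨A, hA, hqA⟩ := hint (Polynomial.C Polynomial.X)
  obtain ⟨B, hB, hqB⟩ := hint Polynomial.X
  have hA' : Polynomial.aeval (Polynomial.C Polynomial.X : Biv K) A = Polynomial.C A := by
    have := Polynomial.aeval_algHom_apply (Polynomial.CAlgHom (R := K) (A := Polynomial K))
      (Polynomial.X) A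
    simpa using this
  have hB' : Polynomial.aeval (Polynomial.X : Biv K) B = B.map Polynomial.C := by
    have : ((Polynomial.aeval (Polynomial.X : Biv K) : Polynomial K →ₐ[K] Biv K) :
        Polynomial K →+* Biv K) = Polynomial.mapRingHom Polynomial.C := by
      apply Polynomial.ringHom_ext'
      · ext r; simp [Polynomial.algebraMap_def]
      · simp
    exact congrArg (fun f => f B) this
  rw [hA'] at hqA
  rw [hB'] at hqB
  have hCA : (Polynomial.C A : Biv K) ≠ 0 := by
    simpa using hA.ne_zero
  have hdeg : q.natDegree = 0 := by
    have := Polynomial.natDegree_le_of_dvd hqA hCA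
    simpa using this
  obtain ⟨q0, rfl⟩ := Polynomial.natDegree_eq_zero.mp hdeg
  rw [Polynomial.C_dvd_iff_dvd_coeff] at hqB
  have := hqB B.natDegree
  rw [Polynomial.coeff_map, hB.coeff_natDegree, Polynomial.C_1] at this
  exact (isUnit_of_dvd_one this).map Polynomial.C

end Shear
section Minor

open Matrix in
lemma minor_lemma {ρ κ : Type} [Fintype ρ] [Fintype κ] [DecidableEq κ] (M : ρ → κ → ℤ) (J : Set κ)
    (H : ℝ) (hH : 1 ≤ H) (hM : ∀ i j, ((|M i j| : ℤ) : ℝ) ≤ H)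
    (hinj : ∀ v ∈ Submodule.span ℚ (Set.range fun i c => (M i c : ℚ)), (∀ c ∈ J, v c = 0) → v = 0) :
    ∃ β : ℤ, β ≠ 0 ∧ ((|β| : ℤ) : ℝ) ≤ (Fintype.card κ).factorial * H ^ Fintype.card κ ∧
      ∀ v ∈ Submodule.span ℚ (Set.range fun i c => (M i c : ℚ)), ∀ c0 : κ,
        (∀ c ∈ J, v c = if c = c0 then 1 else 0) →
        ∃ z ∈ Submodule.span ℤ (Set.range M), ∀ c, (z c : ℚ) = β * v c ∧
          ((|z c| : ℤ) : ℝ) ≤ (Fintype.card κ).factorial * H ^ Fintype.card κ := by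
  classical
  obtain ⟨R, a, ha, hspan, hli⟩ := exists_linearIndependent' ℚ (fun (i : ρ) (c : κ) => (M i c : ℚ))
  rw [← hspan] at hinj ⊢
  have : Finite R := Finite.of_injective a ha
  have := Fintype.ofFinite R
  let A : Matrix R J ℚ := fun i c => (M (a i) c : ℚ)
  have hA : LinearIndependent ℚ A.row := by
    rw [Fintype.linearIndependent_iff] at hli ⊢
    intro y hy
    apply hli y
    apply hinj
    · exact Submodule.sum_mem _ fun i _ => Submodule.smul_mem _ _ (Submodule.subset_span ⟨i, rfl⟩)
    · intro c hc
      have := congrFun hy ⟨c, hc⟩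
      rw [Finset.sum_apply] at this ⊢
      exact this
  have hrank := hA.rank_matrix
  rw [Matrix.rank_eq_finrank_span_cols] at hrank
  have htop : Submodule.span ℚ (Set.range A.col) = ⊤ := by
    apply Submodule.eq_top_of_finrank_eq
    rw [hrank, Module.finrank_fintype_fun_eq_card]
  obtain ⟨S, b, hb, hspanb, hlib⟩ := exists_linearIndependent' ℚ A.col
  rw [htop] at hspanb
  have : Finite S := Finite.of_injective b hb
  have := Fintype.ofFinite S
  let bas := Module.Basis.mk hlib hspanb.ge
  have hcard : Fintype.card R = Fintype.card S := by
    rw [← Module.finrank_eq_card_basis bas, Module.finrank_fintype_fun_eq_card]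
  have eqv : R ≃ S := Fintype.equivOfCardEq hcard
  let b' : R → κ := fun i => (b (eqv i)).1
  have hb' : Function.Injective b' := fun i j h => eqv.injective (hb (Subtype.ext h))
  let B : Matrix R R ℤ := fun i j => M (a i) (b' j)
  have hBq : (B.map (Int.castRingHom ℚ)).det ≠ 0 := by
    rw [← isUnit_iff_ne_zero, ← Matrix.isUnit_iff_isUnit_det,
      ← Matrix.linearIndependent_cols_iff_isUnit]
    exact hlib.comp eqv eqv.injective
  have hdet : ((B.det : ℤ) : ℚ) = (B.map (Int.castRingHom ℚ)).det := by
    have := RingHom.map_det (Int.castRingHom ℚ) B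
    simpa using this
  have hRκ : Fintype.card R ≤ Fintype.card κ := Fintype.card_le_of_injective b' hb'
  have hdetb : ∀ E : Matrix R R ℤ, (∀ i j, ((|E i j| : ℤ) : ℝ) ≤ H) →
      ((|E.det| : ℤ) : ℝ) ≤ (Fintype.card κ).factorial * H ^ Fintype.card κ := by
    intro E hE
    have h1 := Matrix.det_le (A := E.map (Int.castRingHom ℝ)) (abv := AbsoluteValue.abs) (x := H) (by
      intro i j
      have := hE i j
      simpa using this)
    have h2 : ((|E.det| : ℤ) : ℝ) = AbsoluteValue.abs (E.map (Int.castRingHom ℝ)).det := by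
      have := RingHom.map_det (Int.castRingHom ℝ) E
      rw [RingHom.mapMatrix_apply] at this
      rw [← this]; simp
    rw [h2]
    refine h1.trans ?_
    rw [nsmul_eq_mul]
    apply mul_le_mul
    · exact_mod_cast Nat.factorial_le hRκ
    · exact pow_le_pow_right₀ hH hRκ
    · positivity
    · positivity
  refine ⟨B.det, ?_, hdetb B (fun i j => hM _ _), ?_⟩
  · intro h0
    apply hBq
    rw [← hdet, h0]; simp
  intro v hv c0 hc0
  rw [Submodule.mem_span_range_iff_exists_fun] at hv
  obtain ⟨x, hx⟩ := hv
  -- x ᵥ* B = v ∘ b'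
  have hxB : x ᵥ* (B.map (Int.castRingHom ℚ)) = fun j => v (b' j) := by
    ext j
    rw [← hx]
    simp only [Matrix.vecMul, dotProduct, Finset.sum_apply]
    rfl
  let ev : R → ℤ := fun j => if b' j = c0 then 1 else 0
  have hev : (fun j => v (b' j)) = fun j => (ev j : ℚ) := by
    ext j
    rw [hc0 _ (b (eqv j)).2]
    simp [ev, b']
  let w : R → ℤ := ev ᵥ* B.adjugate
  have hw : ∀ k, (w k : ℚ) = B.det * x k := by
    intro k
    have h1 : (x ᵥ* (B.map (Int.castRingHom ℚ))) ᵥ* (B.map (Int.castRingHom ℚ)).adjugate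
        = (B.map (Int.castRingHom ℚ)).det • x := by
      rw [Matrix.vecMul_vecMul, Matrix.mul_adjugate, Matrix.vecMul_smul, Matrix.vecMul_one]
    rw [hxB, hev, ← hdet] at h1
    have h2 := congrFun h1 k
    rw [Pi.smul_apply, smul_eq_mul] at h2
    rw [← h2]
    have h3 : (B.map (Int.castRingHom ℚ)).adjugate = B.adjugate.map (Int.castRingHom ℚ) :=
      (RingHom.map_adjugate (Int.castRingHom ℚ) B).symm
    rw [h3]
    simp [w, Matrix.vecMul, dotProduct]
  refine ⟨∑ k, w k • M (a k), Submodule.sum_mem _ fun k _ => Submodule.smul_mem _ _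
    (Submodule.subset_span ⟨_, rfl⟩), ?_⟩
  intro c
  constructor
  · rw [← hx]
    simp only [Finset.sum_apply, Pi.smul_apply, smul_eq_mul, Int.cast_sum, Int.cast_mul,
      Finset.mul_sum, Function.comp, hw]
    refine Finset.sum_congr rfl fun k _ => by ring
  · by_cases hex : ∃ l, b' l = c0
    · obtain ⟨l, hl⟩ := hex
      have hevl : ev = Pi.single l 1 := by
        ext j
        simp only [ev, Pi.single_apply]
        refine if_congr ?_ rfl rfl
        rw [← hl]; exact hb'.eq_iff
      have : (∑ k, w k • M (a k)) c = (B.updateCol l (fun k => M (a k) c)).det := by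
        rw [← Matrix.cramer_apply, Matrix.cramer_eq_adjugate_mulVec]
        simp [w, hevl, Matrix.mulVec, dotProduct]
      rw [this]
      apply hdetb
      intro i j
      rw [Matrix.updateCol_apply]
      split_ifs <;> exact hM _ _
    · have hev0 : ev = 0 := by
        ext j
        simp only [ev, Pi.zero_apply]
        rw [if_neg]; intro h; exact hex ⟨j, h⟩
      have : (∑ k, w k • M (a k)) c = 0 := by
        simp [w, hev0]
      rw [this]
      simp; positivity

end Minor
section GBsec

variable {R : Type*} [CommRing R]

lemma occurs_le {f : Biv R} {m : ℕ × ℕ} (h : occursIn f m) : monLt m (lmon f) ∨ m = lmon f := by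
  have h1 : m.1 ≤ f.natDegree := by
    apply Polynomial.le_natDegree_of_ne_zero
    intro h0
    apply h
    rw [h0]; simp
  rcases h1.lt_or_eq with h1 | h1
  · exact Or.inl (Or.inl h1)
  · have h2 : m.2 ≤ f.leadingCoeff.natDegree := by
      apply Polynomial.le_natDegree_of_ne_zero
      rw [Polynomial.leadingCoeff, ← h1]; exact h
    rcases h2.lt_or_eq with h2 | h2
    · exact Or.inl (Or.inr ⟨h1, h2⟩)
    · exact Or.inr (Prod.ext h1 h2)

lemma lmon_occurs {f : Biv R} (h : f ≠ 0) : occursIn f (lmon f) := by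
  have : f.leadingCoeff.leadingCoeff ≠ 0 := by simpa using h
  exact this

lemma monLt_asymm {m n : ℕ × ℕ} (h : monLt m n) (h' : monLt n m) : False := by
  unfold monLt at *; omega

lemma monLt_irrefl {m : ℕ × ℕ} (h : monLt m m) : False := monLt_asymm h h

lemma monLt_trans {m n l : ℕ × ℕ} (h : monLt m n) (h' : monLt n l) : monLt m l := by
  unfold monLt at *; omega

lemma monLt_wf : WellFounded monLt := by
  have h := (WellFounded.prod_lex (wellFounded_lt (α := ℕ)) (wellFounded_lt (α := ℕ)))
  refine Subrelation.wf (r := Prod.Lex (· < ·) (· < ·)) ?_ h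
  intro m n hmn
  rw [Prod.lex_iff]
  exact hmn

lemma lmon_eq_of {f : Biv R} {n : ℕ × ℕ} (h1 : occursIn f n)
    (h2 : ∀ m, occursIn f m → monLt m n ∨ m = n) : lmon f = n := by
  have hf : f ≠ 0 := by
    rintro rfl
    apply h1; simp
  rcases h2 _ (lmon_occurs hf) with h | h
  · rcases occurs_le h1 with h' | h'
    · exact (monLt_asymm h h').elim
    · exact h'.symm
  · exact h

lemma monDvd_trans {m n l : ℕ × ℕ} (h : monDvd m n) (h' : monDvd n l) : monDvd m l :=
  ⟨h.1.trans h'.1, h.2.trans h'.2⟩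

lemma coeff_mm (n m : ℕ × ℕ) (r : R) :
    ((Polynomial.monomial n.1 (Polynomial.monomial n.2 r) : Biv R).coeff m.1).coeff m.2 =
      if n = m then r else 0 := by
  rw [Polynomial.coeff_monomial]
  split_ifs with h h' h'
  · rw [Polynomial.coeff_monomial, if_pos (congrArg Prod.snd h')]
  · rw [Polynomial.coeff_monomial, if_neg]
    intro h2; exact h' (Prod.ext h h2)
  · exact absurd (congrArg Prod.fst h') h
  · simp

lemma coeff_mm_mul (e : ℕ × ℕ) (r : R) (p : Biv R) (m : ℕ × ℕ) :
    (((Polynomial.monomial e.1 (Polynomial.monomial e.2 r) : Biv R) * p).coeff m.1).coeff m.2 =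
      if e.1 ≤ m.1 ∧ e.2 ≤ m.2 then r * (p.coeff (m.1 - e.1)).coeff (m.2 - e.2) else 0 := by
  have h1 : (Polynomial.monomial e.1 (Polynomial.monomial e.2 r) : Biv R) * p =
      Polynomial.C (Polynomial.C r * Polynomial.X ^ e.2) * (p * Polynomial.X ^ e.1) := by
    rw [← Polynomial.C_mul_X_pow_eq_monomial, ← Polynomial.C_mul_X_pow_eq_monomial]; ring
  rw [h1, Polynomial.coeff_C_mul, Polynomial.coeff_mul_X_pow', mul_assoc, Polynomial.coeff_C_mul,
    mul_comm (Polynomial.X ^ e.2), Polynomial.coeff_mul_X_pow']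
  split_ifs with h2 h3 h4 h5 h6 <;> first | rfl | (simp; done) | tauto

variable {s : ℕ}

/-- standard monomials. -/
def stdMon {K : Type*} [CommRing K] (g : Fin (s + 1) → Biv K) (m : ℕ × ℕ) : Prop :=
  ∀ l, ¬ monDvd (lmon (g l)) m

lemma std_indep {g : Fin (s + 1) → Biv R} {I : Ideal (Biv R)} (hg : IsReducedGB g I) {p : Biv R}
    (hp : p ∈ I) (hstd : ∀ m, occursIn p m → stdMon g m) : p = 0 := by
  by_contra h0
  obtain ⟨q, hq, hdvd⟩ := hg.1.2 p hp h0
  rw [List.mem_ofFn] at hq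
  obtain ⟨l, rfl⟩ := hq
  exact hstd _ (lmon_occurs h0) l hdvd

lemma strict_std {g : Fin (s + 1) → Biv R} {I : Ideal (Biv R)} (hg : IsReducedGB g I)
    {j : Fin (s + 1)} {m n : ℕ × ℕ} (hm : occursIn (g j) m) (hn : monDvd n m) (hne : n ≠ m) :
    stdMon g n := by
  intro l hl
  by_cases hjl : j = l
  · subst hjl
    rcases occurs_le hm with h | h
    · unfold monDvd at *; unfold monLt at h; omega
    · rw [← h] at hl
      apply hne
      exact Prod.ext (le_antisymm hn.1 hl.1) (le_antisymm hn.2 hl.2)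
  · exact hg.2.2.1 j l hjl m hm (monDvd_trans hl hn)

lemma nonlead_std {g : Fin (s + 1) → Biv R} {I : Ideal (Biv R)} (hg : IsReducedGB g I)
    {j : Fin (s + 1)} {m : ℕ × ℕ} (hm : occursIn (g j) m) (hne : m ≠ lmon (g j)) :
    stdMon g m := by
  intro l hl
  by_cases hjl : j = l
  · subst hjl
    rcases occurs_le hm with h | h
    · unfold monDvd at *; unfold monLt at h; omega
    · exact hne h
  · exact hg.2.2.1 j l hjl m hm hl

lemma gb_degree {K : Type*} [Field K] {g : Fin (s + 1) → Biv K} {I : Ideal (Biv K)}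
    (hg : IsReducedGB g I) (n : ℕ)
    (hdep : ∀ v : Fin (n + 1) → Biv K, ∃ c : Fin (n + 1) → K, c ≠ 0 ∧ ∑ i, c i • v i ∈ I)
    (j : Fin (s + 1)) (m : ℕ × ℕ) (hm : occursIn (g j) m) : m.1 + m.2 ≤ n := by
  by_contra hlt
  let w : Fin (n + 1) → ℕ × ℕ := fun i => (min i m.1, i - m.1)
  have hw : Function.Injective w := by
    intro i i' h
    simp only [w, Prod.mk.injEq] at h
    apply Fin.ext; omega
  obtain ⟨c, hc, hI⟩ := hdep (fun i => Polynomial.monomial (w i).1 (Polynomial.monomial (w i).2 1))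
  have hco : ∀ l : ℕ × ℕ, ((∑ i, c i • (Polynomial.monomial (w i).1 (Polynomial.monomial (w i).2 1)
      : Biv K)).coeff l.1).coeff l.2 = ∑ i, if w i = l then c i else 0 := by
    intro l
    rw [Polynomial.finsetSum_coeff, Polynomial.finsetSum_coeff]
    refine Finset.sum_congr rfl fun i _ => ?_
    rw [Polynomial.coeff_smul, Polynomial.coeff_smul, coeff_mm]
    simp
  have h0 := std_indep hg hI (by
    intro l hl
    unfold occursIn at hl
    rw [hco] at hl
    obtain ⟨i, -, hi⟩ := Finset.exists_ne_zero_of_sum_ne_zero hl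
    have hwi : w i = l := by
      by_contra h; rw [if_neg h] at hi; exact hi rfl
    rw [← hwi]
    have := i.2
    apply strict_std hg hm
    · constructor <;> simp only [w] <;> omega
    · intro h
      have h1 := congrArg Prod.fst h
      have h2 := congrArg Prod.snd h
      simp only [w] at h1 h2
      omega)
  apply hc
  ext i
  have := hco (w i)
  rw [h0] at this
  rw [Finset.sum_eq_single i] at this
  · simpa using this.symm
  · intro i' _ hi'
    rw [if_neg]; intro h; exact hi' (hw h)
  · simp

end GBsec
section ModP

variable {s : ℕ}

lemma toQ_coeff (p : Biv ℤ) (a b : ℕ) :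
    ((toQ p).coeff a).coeff b = (((p.coeff a).coeff b : ℤ) : ℚ) := by
  simp [toQ]

lemma toP_coeff (q : ℕ) (p : Biv ℤ) (a b : ℕ) :
    ((toP q p).coeff a).coeff b = (((p.coeff a).coeff b : ℤ) : ZMod q) := by
  simp [toP]

lemma toQ_CC (r : ℤ) : toQ (Polynomial.C (Polynomial.C r)) = Polynomial.C (Polynomial.C (r : ℚ)) := by
  simp [toQ]

lemma toP_surj (q : ℕ) : Function.Surjective (toP q) := by
  apply Polynomial.map_surjective
  apply Polynomial.map_surjective
  exact ZMod.intCast_surjective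

lemma toP_lift (p : ℕ) [NeZero p] (Q : Biv (ZMod p)) :
    ∃ L : Biv ℤ, toP p L = Q ∧ ∀ m, occursIn L m → occursIn Q m := by
  let L : Biv ℤ := ∑ a ∈ Q.support, Polynomial.monomial a (∑ b ∈ (Q.coeff a).support,
    Polynomial.monomial b (((Q.coeff a).coeff b).val : ℤ))
  have hL : ∀ a b, (L.coeff a).coeff b = (((Q.coeff a).coeff b).val : ℤ) := by
    intro a b
    simp only [L, Polynomial.finsetSum_coeff, Polynomial.coeff_monomial, Finset.sum_ite_eq']
    by_cases ha : a ∈ Q.support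
    · rw [if_pos ha, Polynomial.finsetSum_coeff]
      simp only [Polynomial.coeff_monomial, Finset.sum_ite_eq']
      split_ifs with hb
      · rfl
      · rw [Polynomial.notMem_support_iff] at hb
        rw [hb]; simp
    · rw [if_neg ha]
      rw [Polynomial.notMem_support_iff] at ha
      rw [ha]; simp
  refine ⟨L, ?_, ?_⟩
  · ext a b
    rw [toP_coeff, hL]; simp
  · intro m hm h0
    apply hm
    rw [hL, h0]; simp

section
variable {g : Fin (s + 1) → Biv ℚ} {I : Ideal (Biv ℚ)} {β : ℤ} {gz : Fin (s + 1) → Biv ℤ}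

lemma gz_coeff (hgz : ∀ j, toQ (gz j) = Polynomial.C (Polynomial.C (β : ℚ)) * g j)
    (j : Fin (s + 1)) (a b : ℕ) :
    ((((gz j).coeff a).coeff b : ℤ) : ℚ) = β * ((g j).coeff a).coeff b := by
  rw [← toQ_coeff, hgz]; simp

lemma gz_occurs (hgz : ∀ j, toQ (gz j) = Polynomial.C (Polynomial.C (β : ℚ)) * g j)
    (j : Fin (s + 1)) (m : ℕ × ℕ) (h : ((gz j).coeff m.1).coeff m.2 ≠ 0) : occursIn (g j) m := by
  intro h0
  apply h
  have := gz_coeff hgz j m.1 m.2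
  rw [h0, mul_zero] at this
  exact_mod_cast this

lemma gz_lead (hg : IsReducedGB g I)
    (hgz : ∀ j, toQ (gz j) = Polynomial.C (Polynomial.C (β : ℚ)) * g j)
    (j : Fin (s + 1)) : ((gz j).coeff (lmon (g j)).1).coeff (lmon (g j)).2 = β := by
  have := gz_coeff hgz j (lmon (g j)).1 (lmon (g j)).2
  have h1 : ((g j).coeff (lmon (g j)).1).coeff (lmon (g j)).2 = 1 := hg.2.1 j
  rw [h1, mul_one] at this
  exact_mod_cast this

lemma pseudo (hg : IsReducedGB g I)
    (hgz : ∀ j, toQ (gz j) = Polynomial.C (Polynomial.C (β : ℚ)) * g j) (m : ℕ × ℕ) :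
    ∀ H : Biv ℤ, (∀ n, occursIn H n → monLt n m) →
      ∃ k : ℕ, ∃ S : Biv ℤ, (∀ n, occursIn S n → monLt n m ∧ stdMon g n) ∧
        toQ (Polynomial.C (Polynomial.C (β ^ k)) * H - S) ∈ I := by
  induction m using monLt_wf.induction with
  | _ m ih =>
  intro H hH
  by_cases h0 : H = 0
  · subst h0
    refine ⟨0, 0, ?_, by simp⟩
    intro n hn; exact absurd (by simp) hn
  have hoc := lmon_occurs h0
  have hlt := hH _ hoc
  set n := lmon H with hn
  set r : ℤ := (H.coeff n.1).coeff n.2 with hr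
  by_cases hstd : stdMon g n
  · obtain ⟨k, S, hS, hmem⟩ := ih n hlt
      (H - Polynomial.monomial n.1 (Polynomial.monomial n.2 r)) (by
        intro l hl
        unfold occursIn at hl
        rw [Polynomial.coeff_sub, Polynomial.coeff_sub, coeff_mm] at hl
        by_cases hnl : n = l
        · subst hnl; simp [hr] at hl
        · rw [if_neg hnl, sub_zero] at hl
          exact (occurs_le hl).resolve_right (fun h => hnl h.symm))
    refine ⟨k, S + Polynomial.monomial n.1 (Polynomial.monomial n.2 (β ^ k * r)), ?_, ?_⟩
    · intro l hl
      unfold occursIn at hl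
      rw [Polynomial.coeff_add, Polynomial.coeff_add, coeff_mm] at hl
      by_cases hnl : n = l
      · subst hnl; exact ⟨hlt, hstd⟩
      · rw [if_neg hnl, add_zero] at hl
        exact ⟨monLt_trans (hS l hl).1 hlt, (hS l hl).2⟩
    · convert hmem using 2
      have : (Polynomial.monomial n.1 (Polynomial.monomial n.2 (β ^ k * r)) : Biv ℤ) =
        Polynomial.C (Polynomial.C (β ^ k)) * Polynomial.monomial n.1 (Polynomial.monomial n.2 r) := by
        rw [Polynomial.C_mul_monomial, Polynomial.C_mul_monomial]
      rw [this]; ring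
  · unfold stdMon at hstd
    push Not at hstd
    obtain ⟨l, hl⟩ := hstd
    let e : ℕ × ℕ := (n.1 - (lmon (g l)).1, n.2 - (lmon (g l)).2)
    have hl1 := hl.1
    have hl2 := hl.2
    obtain ⟨k, S, hS, hmem⟩ := ih n hlt
      (Polynomial.C (Polynomial.C β) * H - Polynomial.monomial e.1 (Polynomial.monomial e.2 r) * gz l) (by
        intro t ht
        unfold occursIn at ht
        rw [Polynomial.coeff_sub, Polynomial.coeff_sub, coeff_mm_mul, Polynomial.coeff_C_mul,
          Polynomial.coeff_C_mul] at ht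
        by_cases hnt : n = t
        · exfalso
          apply ht
          rw [if_pos (by simp only [e]; rw [← hnt]; omega)]
          have := gz_lead hg hgz l
          rw [show t.1 - e.1 = (lmon (g l)).1 by simp only [e]; rw [← hnt]; omega,
            show t.2 - e.2 = (lmon (g l)).2 by simp only [e]; rw [← hnt]; omega, this, hr, hnt]
          ring
        by_cases hHt : (H.coeff t.1).coeff t.2 = 0
        · rw [hHt, mul_zero, zero_sub, neg_ne_zero] at ht
          have hc : e.1 ≤ t.1 ∧ e.2 ≤ t.2 := by
            by_contra hc; rw [if_neg hc] at ht; exact ht rfl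
          rw [if_pos hc] at ht
          have ho := gz_occurs hgz l (t.1 - e.1, t.2 - e.2) (right_ne_zero_of_mul ht)
          have hne : ¬ (n.1 = t.1 ∧ n.2 = t.2) := fun h => hnt (Prod.ext h.1 h.2)
          rcases occurs_le ho with h | h
          · unfold monLt at h ⊢
            simp only [e] at h hc
            omega
          · exfalso
            have h1 := congrArg Prod.fst h
            have h2 := congrArg Prod.snd h
            simp only [e] at h1 h2 hc
            omega
        · exact (occurs_le hHt).resolve_right (fun h => hnt h.symm))
    refine ⟨k + 1, S, ?_, ?_⟩
    · intro t ht
      exact ⟨monLt_trans (hS t ht).1 hlt, (hS t ht).2⟩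
    · have hgl : toQ (gz l) ∈ I := by
        rw [hgz]
        exact Ideal.mul_mem_left _ _ (hg.1.1 _ (List.mem_ofFn.mpr ⟨l, rfl⟩)).2
      have : Polynomial.C (Polynomial.C (β ^ (k + 1))) * H - S =
        (Polynomial.C (Polynomial.C (β ^ k)) * (Polynomial.C (Polynomial.C β) * H -
          Polynomial.monomial e.1 (Polynomial.monomial e.2 r) * gz l) - S) +
        (Polynomial.C (Polynomial.C (β ^ k)) *
          Polynomial.monomial e.1 (Polynomial.monomial e.2 r)) * gz l := by
        rw [pow_succ, Polynomial.C_mul, Polynomial.C_mul]; ring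
      rw [this, map_add, map_mul]
      exact add_mem hmem (Ideal.mul_mem_left _ _ hgl)

lemma modp (hg : IsReducedGB g I) (f : Fin 2 → Biv ℤ)
    (hI : I = Ideal.span (Set.range fun i => toQ (f i)))
    (hgz : ∀ j, toQ (gz j) = Polynomial.C (Polynomial.C (β : ℚ)) * g j)
    (hmem : ∀ j, gz j ∈ Ideal.span (Set.range f)) (p : ℕ) (hp : p.Prime) (hpβ : ¬ ((p : ℤ) ∣ β)) :
    IsReducedGB
      (fun j => Polynomial.C (Polynomial.C ((β : ZMod p))⁻¹) * toP p (gz j))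
      (Ideal.span (Set.range fun i => toP p (f i))) := by
  have : Fact p.Prime := ⟨hp⟩
  have hb0 : (β : ZMod p) ≠ 0 := by
    rwa [Ne, ZMod.intCast_zmod_eq_zero_iff_dvd]
  have hspan : Ideal.span (Set.range fun i => toP p (f i)) =
      (Ideal.span (Set.range f)).map (toP p) := by
    rw [Ideal.map_span, ← Set.range_comp]; rfl
  set G : Fin (s + 1) → Biv (ZMod p) :=
    fun j => Polynomial.C (Polynomial.C ((β : ZMod p))⁻¹) * toP p (gz j) with hG
  have hGco : ∀ j a b, ((G j).coeff a).coeff b =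
      (β : ZMod p)⁻¹ * (((gz j).coeff a).coeff b : ℤ) := by
    intro j a b
    simp only [hG]
    rw [Polynomial.coeff_C_mul, Polynomial.coeff_C_mul, toP_coeff]
  have hocc : ∀ j m, occursIn (G j) m → occursIn (g j) m := by
    intro j m hm
    apply gz_occurs hgz
    intro h0
    apply hm
    rw [hGco, h0]; simp
  have hlead : ∀ j, ((G j).coeff (lmon (g j)).1).coeff (lmon (g j)).2 = 1 := by
    intro j
    rw [hGco, gz_lead hg hgz, inv_mul_cancel₀ hb0]
  have hlm : ∀ j, lmon (G j) = lmon (g j) := by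
    intro j
    apply lmon_eq_of
    · unfold occursIn; rw [hlead]; exact one_ne_zero
    · intro m hm; exact occurs_le (hocc j m hm)
  have hmon : ∀ j, lexMonic (G j) := by
    intro j
    have := hlead j
    rw [← hlm] at this
    exact this
  refine ⟨⟨?_, ?_⟩, hmon, ?_, ?_⟩
  · intro q hq
    rw [List.mem_ofFn] at hq
    obtain ⟨j, rfl⟩ := hq
    refine ⟨?_, ?_⟩
    · intro h0
      have := hlead j
      rw [h0] at this
      simp at this
    · rw [hspan]
      exact Ideal.mul_mem_left _ _ (Ideal.mem_map_of_mem _ (hmem j))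
  · intro q hq hq0
    by_contra hcon
    have hstd : stdMon g (lmon q) := by
      intro l hl
      apply hcon
      refine ⟨G l, List.mem_ofFn.mpr ⟨l, rfl⟩, ?_⟩
      rw [hlm]; exact hl
    rw [hspan, Ideal.mem_map_iff_of_surjective _ (toP_surj p)] at hq
    obtain ⟨H0, hH0, hH0q⟩ := hq
    set n := lmon q with hn
    -- the part of H0 with monomials below n
    let r : ℤ := (H0.coeff n.1).coeff n.2
    have hr : (r : ZMod p) ≠ 0 := by
      have : occursIn q n := lmon_occurs hq0
      unfold occursIn at this
      rwa [← hH0q, toP_coeff] at this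
    obtain ⟨q1, hq1⟩ : ∃ q1 : Biv ℤ, (∀ m, occursIn q1 m → monLt m n) ∧
        toP p q1 = q - toP p (Polynomial.monomial n.1 (Polynomial.monomial n.2 r)) := by
      have : NeZero p := ⟨hp.ne_zero⟩
      obtain ⟨L, hL, hLo⟩ := toP_lift p
        (q - toP p (Polynomial.monomial n.1 (Polynomial.monomial n.2 r)))
      refine ⟨L, ?_, hL⟩
      intro m hm
      have hm := hLo m hm
      unfold occursIn at hm
      rw [Polynomial.coeff_sub, Polynomial.coeff_sub, toP_coeff, coeff_mm] at hm
      by_cases hnm : n = m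
      · exfalso
        apply hm
        rw [if_pos hnm, ← hnm, ← hH0q, toP_coeff, sub_self]
      · rw [if_neg hnm, Int.cast_zero, sub_zero] at hm
        exact (occurs_le hm).resolve_right (fun h => hnm h.symm)
    obtain ⟨T, hT⟩ : ∃ T : Biv ℤ, H0 - q1 - Polynomial.monomial n.1 (Polynomial.monomial n.2 r) =
        Polynomial.C (Polynomial.C (p : ℤ)) * T := by
      have hz : toP p (H0 - q1 - Polynomial.monomial n.1 (Polynomial.monomial n.2 r)) = 0 := by
        rw [map_sub, map_sub, hq1.2, hH0q]; ring
      have : Polynomial.C (Polynomial.C (p : ℤ)) ∣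
          H0 - q1 - Polynomial.monomial n.1 (Polynomial.monomial n.2 r) := by
        rw [Polynomial.C_dvd_iff_dvd_coeff]
        intro a
        rw [Polynomial.C_dvd_iff_dvd_coeff]
        intro b
        rw [← ZMod.intCast_zmod_eq_zero_iff_dvd, ← toP_coeff, hz]
        simp
      exact this
    obtain ⟨k, S, hS, hSI⟩ := pseudo hg hgz n q1 hq1.1
    obtain ⟨k', S', hS', hSI'⟩ := pseudo hg hgz ((lmon T).1 + 1, 0) T (by
      intro m hm
      rcases occurs_le hm with h | h
      · left
        unfold monLt at h
        simp only; omega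
      · left; rw [h]; simp)
    let W : Biv ℤ := Polynomial.C (Polynomial.C (β ^ k')) * S +
      Polynomial.monomial n.1 (Polynomial.monomial n.2 (β ^ (k + k') * r)) +
      Polynomial.C (Polynomial.C (p * β ^ k)) * S'
    have hWI : toQ W ∈ I := by
      have e1 : (Polynomial.monomial n.1 (Polynomial.monomial n.2 (β ^ (k + k') * r)) : Biv ℤ) =
        Polynomial.C (Polynomial.C (β ^ k)) * Polynomial.C (Polynomial.C (β ^ k')) *
          Polynomial.monomial n.1 (Polynomial.monomial n.2 r) := by
        rw [mul_assoc, Polynomial.C_mul_monomial, Polynomial.C_mul_monomial,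
          Polynomial.C_mul_monomial, Polynomial.C_mul_monomial, pow_add, mul_assoc]
      have e2 : W = Polynomial.C (Polynomial.C (β ^ k)) * Polynomial.C (Polynomial.C (β ^ k')) * H0
        - Polynomial.C (Polynomial.C (β ^ k')) * (Polynomial.C (Polynomial.C (β ^ k)) * q1 - S)
        - Polynomial.C (Polynomial.C (p * β ^ k)) *
          (Polynomial.C (Polynomial.C (β ^ k')) * T - S') := by
        simp only [W]
        rw [e1, Polynomial.C_mul, Polynomial.C_mul]
        linear_combination -(Polynomial.C (Polynomial.C (β ^ k)) *
          Polynomial.C (Polynomial.C (β ^ k'))) * hT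
      have hH0I : toQ H0 ∈ I := by
        have := Ideal.mem_map_of_mem toQ hH0
        rw [Ideal.map_span, ← Set.range_comp] at this
        rw [hI]; exact this
      rw [e2, map_sub, map_sub]
      refine sub_mem (sub_mem ?_ ?_) ?_ <;> rw [map_mul] <;>
        apply Ideal.mul_mem_left <;> assumption
    have hWc : ∀ m : ℕ × ℕ, (W.coeff m.1).coeff m.2 = β ^ k' * (S.coeff m.1).coeff m.2 +
        (if n = m then β ^ (k + k') * r else 0) + p * β ^ k * (S'.coeff m.1).coeff m.2 := by
      intro m
      simp only [W]
      rw [Polynomial.coeff_add, Polynomial.coeff_add, Polynomial.coeff_add, Polynomial.coeff_add,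
        coeff_mm, Polynomial.coeff_C_mul, Polynomial.coeff_C_mul, Polynomial.coeff_C_mul,
        Polynomial.coeff_C_mul]
    have hW0 := std_indep hg hWI (by
      intro m hm
      unfold occursIn at hm
      rw [toQ_coeff] at hm
      have hm' : (W.coeff m.1).coeff m.2 ≠ 0 := by exact_mod_cast hm
      by_cases h1 : n = m
      · rw [← h1]; exact hstd
      by_cases h2 : (S.coeff m.1).coeff m.2 = 0
      · by_cases h3 : (S'.coeff m.1).coeff m.2 = 0
        · exfalso; apply hm'
          rw [hWc, if_neg h1, h2, h3]; simp
        · exact (hS' m h3).2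
      · exact (hS m h2).2)
    have hSn : (S.coeff n.1).coeff n.2 = 0 := by
      by_contra h
      exact monLt_irrefl (hS n h).1
    have h1 : (W.coeff n.1).coeff n.2 = 0 := by
      have := toQ_coeff W n.1 n.2
      rw [hW0] at this
      simp only [Polynomial.coeff_zero] at this
      exact_mod_cast this.symm
    rw [hWc, hSn, if_pos rfl] at h1
    have h2 := congrArg (Int.cast : ℤ → ZMod p) h1
    push_cast at h2
    simp at h2
    rcases h2 with h2 | h2
    · exact hb0 h2.1
    · exact hr h2
  · intro j l hjl m hm
    rw [hlm]
    exact hg.2.2.1 j l hjl m (hocc j m hm)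
  · intro j l hjl
    rw [hlm, hlm]
    exact hg.2.2.2 j l hjl

end

end ModP
section Final

lemma totDeg_coeff {R : Type*} [CommRing R] {f : Biv R} {d : ℕ} (h : totDeg f ≤ d) (a b : ℕ)
    (hab : d < a + b) : (f.coeff a).coeff b = 0 := by
  by_cases ha : a ∈ f.support
  · apply Polynomial.coeff_eq_zero_of_natDegree_lt
    have : a + (f.coeff a).natDegree ≤ totDeg f :=
      Finset.le_sup (f := fun j => j + (f.coeff j).natDegree) ha
    omega
  · rw [Polynomial.notMem_support_iff] at ha
    rw [ha]; simp

/-- Index set of monomials in a box. -/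
abbrev Box (T : ℕ) : Type := Fin (T + 1) × Fin (T + 1)

/-- Assemble a polynomial from its coefficients on a box. -/
def asm (R : Type*) [CommRing R] (T : ℕ) : (Box T → R) →ₗ[R] Biv R where
  toFun v := ∑ c : Box T, Polynomial.monomial (c.1 : ℕ) (Polynomial.monomial (c.2 : ℕ) (v c))
  map_add' v w := by simp [Finset.sum_add_distrib]
  map_smul' r v := by
    simp only [Pi.smul_apply, RingHom.id_apply, Finset.smul_sum, Polynomial.smul_monomial]

lemma asm_coeff_in {R : Type*} [CommRing R] (T : ℕ) (v : Box T → R) (c : Box T) :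
    ((asm R T v).coeff c.1).coeff c.2 = v c := by
  have : ∀ e : Box T, ((Polynomial.monomial (e.1 : ℕ) (Polynomial.monomial (e.2 : ℕ) (v e)) :
      Biv R).coeff c.1).coeff c.2 = if e = c then v e else 0 := by
    intro e
    have := coeff_mm ((e.1 : ℕ), (e.2 : ℕ)) ((c.1 : ℕ), (c.2 : ℕ)) (v e)
    simp only at this
    rw [this]
    congr 1
    simp [Prod.ext_iff, Fin.ext_iff]
  simp only [asm, LinearMap.coe_mk, AddHom.coe_mk, Polynomial.finsetSum_coeff, this]
  simp

lemma asm_coeff_out {R : Type*} [CommRing R] (T : ℕ) (v : Box T → R) (a b : ℕ)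
    (h : T < a ∨ T < b) : ((asm R T v).coeff a).coeff b = 0 := by
  simp only [asm, LinearMap.coe_mk, AddHom.coe_mk, Polynomial.finsetSum_coeff]
  apply Finset.sum_eq_zero
  rintro ⟨e1, e2⟩ -
  have := coeff_mm ((e1 : ℕ), (e2 : ℕ)) (a, b) (v (e1, e2))
  simp only at this
  rw [this, if_neg]
  intro he
  simp only [Prod.mk.injEq] at he
  omega

lemma biv_ext_box {R : Type*} [CommRing R] (T : ℕ) {p q : Biv R}
    (h : ∀ c : Box T, (p.coeff c.1).coeff c.2 = (q.coeff c.1).coeff c.2)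
    (hp : ∀ a b : ℕ, (T < a ∨ T < b) → (p.coeff a).coeff b = 0)
    (hq : ∀ a b : ℕ, (T < a ∨ T < b) → (q.coeff a).coeff b = 0) : p = q := by
  ext a b
  by_cases hc : T < a ∨ T < b
  · rw [hp a b hc, hq a b hc]
  · push Not at hc
    exact h (⟨a, by omega⟩, ⟨b, by omega⟩)

/-- Coefficients on a box. -/
def boxc (T : ℕ) : Biv ℚ →ₗ[ℚ] (Box T → ℚ) where
  toFun p c := (p.coeff c.1).coeff c.2
  map_add' p q := by ext; simp
  map_smul' r p := by ext; simp

lemma boxc_mul_mem (T T0 : ℕ) (f : Fin 2 → Biv ℤ) (i : Fin 2) {a : Biv ℚ} (ha : a ∈ TD ℚ T0) :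
    boxc T (a * toQ (f i)) ∈ Submodule.span ℚ (Set.range
      fun (r : Fin 2 × Box T0) (c : Box T) =>
        (((((Polynomial.monomial (r.2.1 : ℕ) (Polynomial.monomial (r.2.2 : ℕ) (1 : ℤ)) *
          f r.1 : Biv ℤ).coeff c.1).coeff c.2 : ℤ)) : ℚ)) := by
  rw [TD_decomp ha, Finset.sum_mul, map_sum]
  refine Submodule.sum_mem _ fun x hx => ?_
  rw [Finset.sum_mul, map_sum]
  refine Submodule.sum_mem _ fun y hy => ?_
  rw [Finset.mem_range] at hx hy
  set r := (a.coeff x).coeff y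
  have : Polynomial.monomial x (Polynomial.monomial y r) * toQ (f i) =
      r • toQ (Polynomial.monomial x (Polynomial.monomial y (1 : ℤ)) * f i) := by
    rw [map_mul, ← smul_mul_assoc]
    congr 1
    simp [toQ, Polynomial.smul_monomial]
  rw [this, map_smul]
  apply Submodule.smul_mem
  apply Submodule.subset_span
  refine ⟨(i, ⟨x, hx⟩, ⟨y, hy⟩), ?_⟩
  ext c
  simp only [boxc, LinearMap.coe_mk, AddHom.coe_mk, toQ_coeff]

lemma exists_TD {K : Type*} [Field K] (p : Biv K) : ∃ m, p ∈ TD K m :=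
  ⟨totDeg p, fun a b h => totDeg_coeff le_rfl a b h⟩

lemma Nbound (d : ℕ) (hd : 1 ≤ d) :
    (2 * d ^ 2 + 3 * d + 1) * (2 * d ^ 2 + 3 * d + 1) ≤
      (2 * Delta2 d) ^ 2 * d - (2 * Delta2 d) * d + 2 * Delta2 d := by
  obtain ⟨n, hn⟩ : ∃ n, n = 2 * Delta2 d := ⟨_, rfl⟩
  rw [← hn]
  have h1 : 2 * d ^ 2 + 3 * d + 1 ≤ n := by
    rw [hn]; unfold Delta2
    have : d ≤ max d 3 := le_max_left _ _
    have h3 : 3 ≤ max d 3 := le_max_right _ _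
    nlinarith
  have h2 : n * n + n * d ≤ n ^ 2 * d + n := by
    obtain ⟨e, rfl⟩ : ∃ e, d = e + 1 := ⟨d - 1, by omega⟩
    have : n * e ≤ n * (n * e) := by
      rcases Nat.eq_zero_or_pos n with h | h
      · simp [h]
      · exact Nat.mul_le_mul_left _ (Nat.le_mul_of_pos_left _ h)
    nlinarith
  have h3 := Nat.mul_le_mul h1 h1
  omega

lemma hbound (d : ℕ) (hd : 1 ≤ d) (h : ℝ) (hh : 0 ≤ h) (r : ℕ)
    (hr : r = (2 * d ^ 2 + 3 * d + 1) * (2 * d ^ 2 + 3 * d + 1)) :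
    (r.factorial : ℝ) * Real.exp h ^ r ≤ Real.exp (Cfun 2 d (Delta2 d) h) := by
  have hN := Nbound d hd
  rw [← hr] at hN
  have hr0 : 0 < r := by rw [hr]; positivity
  unfold Cfun Bfun
  set N : ℕ := (2 * Delta2 d) ^ 2 * d - (2 * Delta2 d) * d + 2 * Delta2 d
  have hN0 : 0 < N := lt_of_lt_of_le hr0 hN
  have hD : 1 ≤ 2 * Delta2 d := by
    unfold Delta2
    have h3 : 3 ≤ max d 3 := le_max_right _ _
    nlinarith
  have e1 : (r.factorial : ℝ) ≤ Real.exp (N * Real.log N) := by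
    have : (r.factorial : ℝ) ≤ (N : ℝ) ^ N := by
      exact_mod_cast (Nat.factorial_le_pow r).trans
        ((Nat.pow_le_pow_left hN r).trans (Nat.pow_le_pow_right hN0 hN))
    rwa [mul_comm, Real.exp_mul, Real.exp_log (by exact_mod_cast hN0), Real.rpow_natCast]
  have e2 : Real.exp h ^ r ≤ Real.exp (N * h) := by
    rw [← Real.exp_nat_mul]
    apply Real.exp_le_exp.mpr
    gcongr
  calc (r.factorial : ℝ) * Real.exp h ^ r ≤ Real.exp (N * Real.log N) * Real.exp (N * h) := by
        gcongr
    _ = Real.exp (N * Real.log N + N * h) := (Real.exp_add _ _).symm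
    _ ≤ _ := by
      apply Real.exp_le_exp.mpr
      have l1 : 0 ≤ Real.log (((2 * Delta2 d : ℕ) : ℝ) * ((d : ℝ) + 1)) := by
        apply Real.log_nonneg
        have : (1 : ℝ) ≤ ((2 * Delta2 d : ℕ) : ℝ) := by exact_mod_cast hD
        nlinarith [(Nat.cast_nonneg d : (0 : ℝ) ≤ d)]
      have l2 : 0 ≤ Real.log 2 := Real.log_nonneg (by norm_num)
      nlinarith

lemma span_pair_iff (f : Fin 2 → Biv ℤ) (x : Biv ℚ) :
    x ∈ Ideal.span (Set.range fun i => toQ (f i)) ↔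
      ∃ a b, x = a * toQ (f 0) + b * toQ (f 1) := by
  have : (Set.range fun i => toQ (f i)) = {toQ (f 0), toQ (f 1)} := by
    ext y; simp [Fin.exists_fin_two, eq_comm]
  rw [this, Ideal.mem_span_pair]
  simp only [eq_comm]

lemma final_struct {s : ℕ}
    (f : Fin 2 → Biv ℤ) (d : ℕ)
    (htot : ∀ i, totDeg (f i) ≤ d)
    (I : Ideal (Biv ℚ)) (hI : I = Ideal.span (Set.range fun i => toQ (f i)))
    (hdim : FiniteDimensional ℚ (Biv ℚ ⧸ I))
    (g : Fin (s + 1) → Biv ℚ) (hg : IsReducedGB g I) :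
    (∃ i, f i ≠ 0) ∧ (∀ j, g j ∈ TD ℚ (d ^ 2)) ∧
    ∀ j, ∃ a b, a ∈ TD ℚ (2 * d ^ 2 + 2 * d) ∧ b ∈ TD ℚ (2 * d ^ 2 + 2 * d) ∧
      g j = a * toQ (f 0) + b * toQ (f 1) := by
  have hmem : ∀ x, x ∈ I ↔ ∃ a b, x = a * toQ (f 0) + b * toQ (f 1) := by
    intro x; rw [hI]; exact span_pair_iff f x
  have hrel : IsRelPrime (toQ (f 0)) (toQ (f 1)) :=
    relPrime_of_finite I ((hmem _).2 ⟨1, 0, by ring⟩) ((hmem _).2 ⟨0, 1, by ring⟩)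
      (fun x hx => (hmem x).1 hx)
  have hTD : ∀ i, toQ (f i) ∈ TD ℚ d := by
    intro i a b hab
    rw [toQ_coeff, totDeg_coeff (htot i) a b hab]; simp
  have hne : toQ (f 0) ≠ 0 ∨ toQ (f 1) ≠ 0 := by
    by_contra hcon
    push Not at hcon
    rw [hcon.1, hcon.2] at hrel
    have := hrel (dvd_zero 0) (dvd_zero 0)
    exact not_isUnit_zero this
  have hdep : ∀ v : Fin (d ^ 2 + 1) → Biv ℚ, ∃ c : Fin (d ^ 2 + 1) → ℚ, c ≠ 0 ∧
      ∑ i, c i • v i ∈ I := by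
    intro v
    choose m hm using fun i => exists_TD (v i)
    have hv : ∀ i, v i ∈ TD ℚ (Finset.univ.sup m) := fun i =>
      TD_mono (Finset.le_sup (Finset.mem_univ i)) (hm i)
    rcases hne with h0 | h0
    · obtain ⟨c, hc, a, b, hab⟩ := bezout_dep (hTD 0) (hTD 1) h0 hrel _ v hv
      exact ⟨c, hc, (hmem _).2 ⟨a, b, hab⟩⟩
    · obtain ⟨c, hc, a, b, hab⟩ := bezout_dep (hTD 1) (hTD 0) h0 hrel.symm _ v hv
      exact ⟨c, hc, (hmem _).2 ⟨b, a, by rw [hab]; ring⟩⟩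
  have hgT : ∀ j, g j ∈ TD ℚ (d ^ 2) := by
    intro j a b hab
    by_contra hc
    have := gb_degree hg (d ^ 2) hdep j (a, b) hc
    simp only at this
    omega
  refine ⟨?_, hgT, ?_⟩
  · rcases hne with h0 | h0
    · exact ⟨0, fun h => h0 (by rw [h]; simp)⟩
    · exact ⟨1, fun h => h0 (by rw [h]; simp)⟩
  · intro j
    obtain ⟨A, B, hAB⟩ := (hmem _).1 (hg.1.1 (g j) (List.mem_ofFn.mpr ⟨j, rfl⟩)).2
    have e : d ^ 2 + d ^ 2 + 2 * d = 2 * d ^ 2 + 2 * d := by ring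
    rcases hne with h0 | h0
    · obtain ⟨a, b, ha, hb, hab⟩ := memb_bound (hTD 0) (hTD 1) h0 hrel _ _ (hgT j) A B hAB
      rw [e] at ha hb
      exact ⟨a, b, ha, hb, hab⟩
    · obtain ⟨a, b, ha, hb, hab⟩ := memb_bound (hTD 1) (hTD 0) h0 hrel.symm _ _ (hgT j) B A
        (by rw [hAB]; ring)
      rw [e] at ha hb
      exact ⟨b, a, hb, ha, by rw [hab]; ring⟩

end Final

/-- let `F = (f_1, f_2) ⊂ ℤ[x,y]` generate a zero-dimensional ideal
`I ⊆ ℚ[x,y]`, with total degrees at most `d ≥ 1` and coefficients of absolute value at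
most `e^h`. Let `G = (g_0, …, g_s)` be the reduced minimal lexicographic Gröbner basis
of `I` (for `x ≺ y`). Then there is a nonzero integer `β` such that (a) all `β gⱼ`
have integer coefficients, (b) `|β|` and all coefficients of the `β gⱼ` are at most
`exp (C(2,d,Δ₂(d),h))` in absolute value, and (c) for every prime `p ∤ β`, the images
of the `gⱼ` in `F_p[x,y]` form the reduced minimal lexicographic Gröbner basis of
`⟨f_1 mod p, f_2 mod p⟩`. -/
theorem height_bound_case2 {s : ℕ}
    (f : Fin 2 → Biv ℤ) (d : ℕ) (hd : 1 ≤ d) (h : ℝ)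
    (htot : ∀ i, totDeg (f i) ≤ d)
    (hht : ∀ i (a b : ℕ), ((|((f i).coeff a).coeff b| : ℤ) : ℝ) ≤ Real.exp h)
    (I : Ideal (Biv ℚ)) (hI : I = Ideal.span (Set.range fun i => toQ (f i)))
    (hdim : FiniteDimensional ℚ (Biv ℚ ⧸ I))
    (g : Fin (s + 1) → Biv ℚ) (hg : IsReducedGB g I) :
    ∃ β : ℤ, β ≠ 0 ∧
      ∃ gz : Fin (s + 1) → Biv ℤ,
        (∀ j, toQ (gz j) = Polynomial.C (Polynomial.C (β : ℚ)) * g j) ∧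
        ((|β| : ℝ) ≤ Real.exp (Cfun 2 d (Delta2 d) h)) ∧
        (∀ j (a b : ℕ), ((|((gz j).coeff a).coeff b| : ℤ) : ℝ) ≤
          Real.exp (Cfun 2 d (Delta2 d) h)) ∧
        (∀ p : ℕ, p.Prime → ¬ ((p : ℤ) ∣ β) →
          IsReducedGB
            (fun j => Polynomial.C (Polynomial.C ((β : ZMod p))⁻¹) * toP p (gz j))
            (Ideal.span (Set.range fun i => toP p (f i)))) := by
  obtain ⟨⟨i0, hi0⟩, hgT, hgab⟩ := final_struct f d htot I hI hdim g hg
  have hh : 0 ≤ h := by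
    obtain ⟨a, ha⟩ : ∃ a, (f i0).coeff a ≠ 0 := by
      by_contra hc; push Not at hc; exact hi0 (Polynomial.ext (by simpa using hc))
    obtain ⟨b, hb⟩ : ∃ b, ((f i0).coeff a).coeff b ≠ 0 := by
      by_contra hc; push Not at hc; exact ha (Polynomial.ext (by simpa using hc))
    have h1 : (1 : ℝ) ≤ ((|((f i0).coeff a).coeff b| : ℤ) : ℝ) := by
      exact_mod_cast Int.one_le_abs hb
    exact Real.exp_le_exp.mp (by rw [Real.exp_zero]; exact h1.trans (hht i0 a b))
  obtain ⟨T0, hT0⟩ : ∃ T0, T0 = 2 * d ^ 2 + 2 * d := ⟨_, rfl⟩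
  obtain ⟨T, hT⟩ : ∃ T, T = 2 * d ^ 2 + 3 * d := ⟨_, rfl⟩
  have hT0T : T0 + d = T := by omega
  rw [← hT0] at hgab
  let rowp : Fin 2 × Box T0 → Biv ℤ := fun r =>
    Polynomial.monomial (r.2.1 : ℕ) (Polynomial.monomial (r.2.2 : ℕ) (1 : ℤ)) * f r.1
  let M : Fin 2 × Box T0 → Box T → ℤ := fun r c => ((rowp r).coeff c.1).coeff c.2
  have hrowc : ∀ r (a b : ℕ), ((rowp r).coeff a).coeff b =
      if (r.2.1 : ℕ) ≤ a ∧ (r.2.2 : ℕ) ≤ b then ((f r.1).coeff (a - r.2.1)).coeff (b - r.2.2)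
      else 0 := by
    intro r a b
    have := coeff_mm_mul ((r.2.1 : ℕ), (r.2.2 : ℕ)) 1 (f r.1) (a, b)
    simpa [rowp] using this
  have hrow0 : ∀ r (a b : ℕ), (T < a ∨ T < b) → ((rowp r).coeff a).coeff b = 0 := by
    intro r a b hab
    rw [hrowc]
    split_ifs with hc
    · apply totDeg_coeff (htot r.1)
      have h1 := r.2.1.2
      have h2 := r.2.2.2
      omega
    · rfl
  have hasm : ∀ r, asm ℤ T (M r) = rowp r := by
    intro r
    apply biv_ext_box T
    · intro c; rw [asm_coeff_in]
    · exact asm_coeff_out T _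
    · exact hrow0 r
  have hM : ∀ r c, ((|M r c| : ℤ) : ℝ) ≤ Real.exp h := by
    intro r c
    simp only [M]
    rw [hrowc]
    split_ifs
    · exact hht _ _ _
    · simpa using (Real.exp_pos h).le
  have hasmQ : ∀ z : Box T → ℤ, toQ (asm ℤ T z) = asm ℚ T (fun c => (z c : ℚ)) := by
    intro z
    apply biv_ext_box T
    · intro c; rw [toQ_coeff, asm_coeff_in, asm_coeff_in]
    · intro a b hab; rw [toQ_coeff, asm_coeff_out T _ a b hab]; simp
    · exact asm_coeff_out T _
  have hspanI : ∀ v ∈ Submodule.span ℚ (Set.range fun r c => (M r c : ℚ)), asm ℚ T v ∈ I := by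
    have : Submodule.span ℚ (Set.range fun r c => (M r c : ℚ)) ≤
        (I.restrictScalars ℚ).comap (asm ℚ T) := by
      rw [Submodule.span_le]
      rintro _ ⟨r, rfl⟩
      change asm ℚ T (fun c => (M r c : ℚ)) ∈ I
      rw [← hasmQ, hasm, hI]
      simp only [rowp]
      rw [map_mul]
      exact Ideal.mul_mem_left _ _ (Ideal.subset_span ⟨r.1, rfl⟩)
    exact fun v hv => this hv
  let J : Set (Box T) := {c | ¬ stdMon g ((c.1 : ℕ), (c.2 : ℕ))}
  obtain ⟨β, hβ0, hβ, hz⟩ := minor_lemma M J (Real.exp h) (Real.one_le_exp hh) hM (by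
    intro v hv hvJ
    have h0 : asm ℚ T v = 0 := by
      apply std_indep hg (hspanI v hv)
      intro m hm
      by_contra hstd
      apply hm
      by_cases hc : T < m.1 ∨ T < m.2
      · exact asm_coeff_out T _ _ _ hc
      · push Not at hc
        have := asm_coeff_in T v (⟨m.1, by omega⟩, ⟨m.2, by omega⟩)
        simp only at this
        rw [this]
        exact hvJ _ hstd
    ext c
    rw [← asm_coeff_in T v c, h0]; simp)
  have hcard : Fintype.card (Box T) = (2 * d ^ 2 + 3 * d + 1) * (2 * d ^ 2 + 3 * d + 1) := by
    simp [hT]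
  have hbd := hbound d hd h hh _ hcard
  have hz' : ∀ j, ∃ z ∈ Submodule.span ℤ (Set.range M), ∀ c,
      (z c : ℚ) = β * ((g j).coeff (c.1 : ℕ)).coeff (c.2 : ℕ) ∧
      ((|z c| : ℤ) : ℝ) ≤ (Fintype.card (Box T)).factorial * Real.exp h ^ Fintype.card (Box T) := by
    intro j
    obtain ⟨a, b, ha, hb, hab⟩ := hgab j
    have hv : boxc T (g j) ∈ Submodule.span ℚ (Set.range fun r c => (M r c : ℚ)) := by
      rw [hab, map_add]
      exact add_mem (boxc_mul_mem T T0 f 0 ha) (boxc_mul_mem T T0 f 1 hb)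
    have hgj0 := (hg.1.1 (g j) (List.mem_ofFn.mpr ⟨j, rfl⟩)).1
    have hlo := lmon_occurs hgj0
    have hle : (lmon (g j)).1 + (lmon (g j)).2 ≤ d ^ 2 := by
      by_contra hc
      exact hlo (hgT j _ _ (by omega))
    refine hz (boxc T (g j)) hv (⟨(lmon (g j)).1, by omega⟩, ⟨(lmon (g j)).2, by omega⟩) ?_
    intro c hc
    change ((g j).coeff (c.1 : ℕ)).coeff (c.2 : ℕ) = _
    split_ifs with hcc
    · rw [hcc]
      exact hg.2.1 j
    · by_contra hne
      refine hc (nonlead_std hg (m := ((c.1 : ℕ), (c.2 : ℕ))) hne ?_)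
      intro he
      apply hcc
      ext
      · exact congrArg Prod.fst he
      · exact congrArg Prod.snd he
  choose z hzs hzc using hz'
  have hgz : ∀ j, toQ (asm ℤ T (z j)) = Polynomial.C (Polynomial.C (β : ℚ)) * g j := by
    intro j
    apply biv_ext_box T
    · intro c
      rw [toQ_coeff, asm_coeff_in, (hzc j c).1, Polynomial.coeff_C_mul, Polynomial.coeff_C_mul]
    · intro a b hab; rw [toQ_coeff, asm_coeff_out T _ a b hab]; simp
    · intro a b hab
      rw [Polynomial.coeff_C_mul, Polynomial.coeff_C_mul, hgT j a b (by omega), mul_zero]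
  refine ⟨β, hβ0, fun j => asm ℤ T (z j), hgz, ?_, ?_, ?_⟩
  · refine le_trans ?_ hbd
    exact_mod_cast hβ
  · intro j a b
    by_cases hab : T < a ∨ T < b
    · rw [asm_coeff_out T _ a b hab]
      simpa using (Real.exp_pos _).le
    · push Not at hab
      have := asm_coeff_in T (z j) (⟨a, by omega⟩, ⟨b, by omega⟩)
      simp only at this
      rw [this]
      exact (hzc j _).2.trans hbd
  · intro p hp hpβ
    refine modp hg f hI hgz ?_ p hp hpβ
    intro j
    have : Submodule.span ℤ (Set.range M) ≤
        ((Ideal.span (Set.range f)).restrictScalars ℤ).comap (asm ℤ T) := by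
      rw [Submodule.span_le]
      rintro _ ⟨r, rfl⟩
      change asm ℤ T (M r) ∈ Ideal.span (Set.range f)
      rw [hasm]
      exact Ideal.mul_mem_left _ _ (Ideal.subset_span ⟨r.1, rfl⟩)
    exact this (hzs j)
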